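/- arXiv:1108.4257 — 5 statements merged into one kernel-verified Lean document; each statement's English description precedes it below -/
import Mathlib

section
/- For LOC(H,T): (1) for any X₁, X₂ ∈ F^{T×M} with ⟨X₁^T⟩ = ⟨X₂^T⟩ and any subspace V of F^N, there exists a bijection f from {Y ∈ F^{T×N} : ⟨Y^T⟩ = V} onto itself such that Pr{X₁H = Y} = Pr{X₂H = f(Y)} for all Y in this set; (2) for any Y₁, Y₂ ∈ F^{T×N} with ⟨Y₁^T⟩ = ⟨Y₂^T⟩ and any subspace U of F^M, there exists a bijection g from {X ∈ F^{T×M} : ⟨X^T⟩ = U} onto itself such that Pr{XH = Y₁} = Pr{g(X)H = Y₂} for all X in this set. -/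
open scoped Classical
open Finset Matrix Module

noncomputable section

/-- χ_m[r] = (q^m − 1)(q^m − q)⋯(q^m − q^{r−1}), with χ_m[0] = 1. -/
def chi (q m r : ℕ) : ℕ := ∏ i ∈ Finset.range r, (q ^ m - q ^ i)

/-- χ̃_m[r] = χ_m[r] · q^{−mr}, as a real number. -/
def chiTilde (q m r : ℕ) : ℝ := (chi q m r : ℝ) / (q : ℝ) ^ (m * r)

/-- Gaussian binomial [m choose r]_q = χ_m[r]/χ_r[r], as a real number. -/
def gaussR (q m r : ℕ) : ℝ := (chi q m r : ℝ) / (chi q r r : ℝ)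

variable {F : Type} [Field F] [Fintype F]

/-- Column space of a matrix. -/
def colSpace {m n : ℕ} (A : Matrix (Fin m) (Fin n) F) : Submodule F (Fin m → F) :=
  LinearMap.range A.mulVecLin

/-- Row space of a matrix. -/
def rowSpace {m n : ℕ} (A : Matrix (Fin m) (Fin n) F) : Submodule F (Fin n → F) :=
  colSpace Aᵀ

/-- Pr{XH = Y} for a random transfer matrix H with PMF `pH`, input `X`, output `Y`. -/
def prXY {k M N : ℕ} (pH : Matrix (Fin M) (Fin N) F → ℝ)
    (X : Matrix (Fin k) (Fin M) F) (Y : Matrix (Fin k) (Fin N) F) : ℝ :=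
  ∑ Hm : Matrix (Fin M) (Fin N) F, if X * Hm = Y then pH Hm else 0

/-- A PMF on a finite type: nonnegative and summing to one. -/
def IsPMF {Ω : Type*} [Fintype Ω] (p : Ω → ℝ) : Prop :=
  (∀ x, 0 ≤ p x) ∧ ∑ x, p x = 1

/-- α-type distribution: matrices with the same row space are equiprobable. -/
def IsAlphaType {T M : ℕ} (p : Matrix (Fin T) (Fin M) F → ℝ) : Prop :=
  ∀ X X' : Matrix (Fin T) (Fin M) F, rowSpace X = rowSpace X' → p X = p X'

/-- Mutual information I(f;g) (base 2) between two functions of a finitely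
distributed random element with PMF `p`; terms of zero probability vanish. -/
def mutualInfo {Ω A B : Type*} [Fintype Ω] (p : Ω → ℝ) (f : Ω → A) (g : Ω → B) : ℝ :=
  ∑ ω : Ω, p ω * Real.logb 2
    ((∑ ω' : Ω, if f ω' = f ω ∧ g ω' = g ω then p ω' else 0) /
      ((∑ ω' : Ω, if f ω' = f ω then p ω' else 0) *
        (∑ ω' : Ω, if g ω' = g ω then p ω' else 0)))

/-- Joint PMF of the input X and the independent transfer matrix H;
the channel output is Y = XH, i.e., `ω.1 * ω.2`. -/
def jointPMF {T M N : ℕ} (pX : Matrix (Fin T) (Fin M) F → ℝ)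
    (pH : Matrix (Fin M) (Fin N) F → ℝ) :
    Matrix (Fin T) (Fin M) F × Matrix (Fin M) (Fin N) F → ℝ :=
  fun ω => pX ω.1 * pH ω.2

/-- I(X;Y) for the LOC with input PMF `pX` and transfer PMF `pH`. -/
def miXY {T M N : ℕ} (pX : Matrix (Fin T) (Fin M) F → ℝ)
    (pH : Matrix (Fin M) (Fin N) F → ℝ) : ℝ :=
  mutualInfo (jointPMF pX pH) (fun ω => ω.1) (fun ω => ω.1 * ω.2)

/-- I(⟨X⟩;⟨Y⟩), mutual information between the column spaces. -/
def miColCol {T M N : ℕ} (pX : Matrix (Fin T) (Fin M) F → ℝ)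
    (pH : Matrix (Fin M) (Fin N) F → ℝ) : ℝ :=
  mutualInfo (jointPMF pX pH) (fun ω => colSpace ω.1) (fun ω => colSpace (ω.1 * ω.2))

/-- I(⟨X^T⟩;⟨Y^T⟩), mutual information between the row spaces. -/
def miRowRow {T M N : ℕ} (pX : Matrix (Fin T) (Fin M) F → ℝ)
    (pH : Matrix (Fin M) (Fin N) F → ℝ) : ℝ :=
  mutualInfo (jointPMF pX pH) (fun ω => rowSpace ω.1) (fun ω => rowSpace (ω.1 * ω.2))

/-- I(rank(X);rank(Y)). -/
def miRankRank {T M N : ℕ} (pX : Matrix (Fin T) (Fin M) F → ℝ)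
    (pH : Matrix (Fin M) (Fin N) F → ℝ) : ℝ :=
  mutualInfo (jointPMF pX pH) (fun ω => ω.1.rank) (fun ω => (ω.1 * ω.2).rank)

/-- Pr{rank(X) = r}. -/
def prRankX {T M : ℕ} (pX : Matrix (Fin T) (Fin M) F → ℝ) (r : ℕ) : ℝ :=
  ∑ x : Matrix (Fin T) (Fin M) F, if x.rank = r then pX x else 0

/-- Pr{rank(X) = r, rank(Y) = s} where Y = XH. -/
def prRankXY {T M N : ℕ} (pX : Matrix (Fin T) (Fin M) F → ℝ)
    (pH : Matrix (Fin M) (Fin N) F → ℝ) (r s : ℕ) : ℝ :=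
  ∑ ω : Matrix (Fin T) (Fin M) F × Matrix (Fin M) (Fin N) F,
    if ω.1.rank = r ∧ (ω.1 * ω.2).rank = s then jointPMF pX pH ω else 0

/-- J(rank(X);rank(Y)) = ∑_{r,s} Pr{rank X = r, rank Y = s} · log₂(χ_T[s]/χ_r[s]). -/
def Jrank (q : ℕ) {T M N : ℕ} (pX : Matrix (Fin T) (Fin M) F → ℝ)
    (pH : Matrix (Fin M) (Fin N) F → ℝ) : ℝ :=
  ∑ r ∈ Finset.range (T + 1), ∑ s ∈ Finset.range (T + 1),
    prRankXY pX pH r s * Real.logb 2 ((chi q T s : ℝ) / (chi q r s : ℝ))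

/-- Row-space-symmetric LOC: the transition probability P(Y|X) for ⟨Y⟩ ⊆ ⟨X⟩
is determined by the row spaces of the input and output matrices. -/
def RowSpaceSymmetric (T : ℕ) {M N : ℕ} (pH : Matrix (Fin M) (Fin N) F → ℝ) : Prop :=
  ∀ (X X' : Matrix (Fin T) (Fin M) F) (Y Y' : Matrix (Fin T) (Fin N) F),
    colSpace Y ≤ colSpace X → colSpace Y' ≤ colSpace X' →
    rowSpace X = rowSpace X' → rowSpace Y = rowSpace Y' →
    prXY pH X Y = prXY pH X' Y'

/-- Pr{⟨XH⟩ = V} for a fixed input matrix X. -/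
def prColY (T : ℕ) {M N : ℕ} (pH : Matrix (Fin M) (Fin N) F → ℝ)
    (X : Matrix (Fin T) (Fin M) F) (V : Submodule F (Fin T → F)) : ℝ :=
  ∑ Hm : Matrix (Fin M) (Fin N) F, if colSpace (X * Hm) = V then pH Hm else 0

/-- Unique subspace degradation: Pr{⟨XH⟩ = V} is the same for all inputs X
with the same column space. -/
def UniqueSubspaceDegradation (T : ℕ) {M N : ℕ}
    (pH : Matrix (Fin M) (Fin N) F → ℝ) : Prop :=
  ∀ (V : Submodule F (Fin T → F)) (X X' : Matrix (Fin T) (Fin M) F),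
    colSpace X = colSpace X' → prColY T pH X V = prColY T pH X' V

/-- Rank-symmetric LOC: P(Y|X) = μ(rank X, rank Y) when ⟨Y⟩ ⊆ ⟨X⟩, and 0 otherwise. -/
def RankSymmetric (T : ℕ) {M N : ℕ} (pH : Matrix (Fin M) (Fin N) F → ℝ) : Prop :=
  ∃ μ : ℕ → ℕ → ℝ, (∀ a b, 0 ≤ μ a b ∧ μ a b ≤ 1) ∧
    ∀ (X : Matrix (Fin T) (Fin M) F) (Y : Matrix (Fin T) (Fin N) F),
      prXY pH X Y = if colSpace Y ≤ colSpace X then μ X.rank Y.rank else 0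

/-- rank*(H) = max{r : Pr{rank H = r} > 0}. -/
def rankStar {M N : ℕ} (pH : Matrix (Fin M) (Fin N) F → ℝ) : ℕ :=
  sSup {r : ℕ | 0 < ∑ Hm : Matrix (Fin M) (Fin N) F, if Hm.rank = r then pH Hm else 0}

/-!
Matrices with equal row spaces are left multiples of each other by an invertible matrix `P`: two
maps with the same range and kernels of the same dimension differ by an automorphism of their
domain. Left multiplication by `P` preserves all row spaces, and `X * H = Y` is equivalent to
`P * X * H = P * Y`, so the permutation sought is `P` acting on the outputs, respectively on the
inputs: corresponding events in `H` are equal as sets, so they have equal probability.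
-/

section LinearMap

variable {K V V' W : Type*} [DivisionRing K] [AddCommGroup V] [Module K V]
  [AddCommGroup V'] [Module K V'] [AddCommGroup W] [Module K W]

theorem exists_linearEquiv_ker_prod_range (f : V →ₗ[K] W) :
    ∃ e : V ≃ₗ[K] f.ker × f.range, ∀ v, ((e v).2 : W) = f v := by
  have exact_ker : Function.Exact f.ker.subtype f.rangeRestrict :=
    fun v => by simp [Subtype.ext_iff]
  obtain ⟨s, hs⟩ := f.rangeRestrict.exists_rightInverse_of_surjective f.range_rangeRestrict
  obtain ⟨e, -, he⟩ := exact_ker.splitSurjectiveEquiv f.ker.injective_subtype ⟨s, hs⟩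
  exact ⟨e, fun v => congrArg Subtype.val (LinearMap.congr_fun he v).symm⟩

theorem exists_linearEquiv_comp_eq_of_range_eq {f : V →ₗ[K] W} {g : V' →ₗ[K] W}
    (ker_equiv : f.ker ≃ₗ[K] g.ker) (range_eq : f.range = g.range) :
    ∃ e : V ≃ₗ[K] V', g ∘ₗ e.toLinearMap = f := by
  obtain ⟨a, ha⟩ := exists_linearEquiv_ker_prod_range f
  obtain ⟨b, hb⟩ := exists_linearEquiv_ker_prod_range g
  refine ⟨a ≪≫ₗ ker_equiv.prodCongr (.ofEq _ _ range_eq) ≪≫ₗ b.symm, LinearMap.ext fun v => ?_⟩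
  simp [← ha, ← hb]

theorem exists_linearEquiv_comp_eq_of_finrank_eq [FiniteDimensional K V] [FiniteDimensional K V']
    {f : V →ₗ[K] W} {g : V' →ₗ[K] W} (finrank_eq : finrank K V = finrank K V')
    (range_eq : f.range = g.range) :
    ∃ e : V ≃ₗ[K] V', g ∘ₗ e.toLinearMap = f := by
  have finrank_ker_eq : finrank K f.ker = finrank K g.ker := by
    have hf := f.finrank_range_add_finrank_ker
    have hg := g.finrank_range_add_finrank_ker
    rw [range_eq] at hf
    omega
  exact exists_linearEquiv_comp_eq_of_range_eq (.ofFinrankEq _ _ finrank_ker_eq) range_eq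

end LinearMap

section LeftMultiplication

variable {l m n R : Type*} [Fintype m] [Semiring R]

theorem range_vecMulLinear_mul_le [Fintype l] (A : Matrix l m R) (X : Matrix m n R) :
    (A * X).vecMulLinear.range ≤ X.vecMulLinear.range := by
  rintro _ ⟨v, rfl⟩
  exact ⟨v ᵥ* A, vecMul_vecMul v A X⟩

variable [DecidableEq m]

theorem range_vecMulLinear_units_mul (P : (Matrix m m R)ˣ) (X : Matrix m n R) :
    (P.val * X).vecMulLinear.range = X.vecMulLinear.range := by
  refine le_antisymm (range_vecMulLinear_mul_le _ X) ?_
  simpa [← Matrix.mul_assoc] using range_vecMulLinear_mul_le P⁻¹.val (P.val * X)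

/-- Left multiplication by an invertible matrix, as a permutation of the matrices with row space
`V`. The row space is encoded as the range of `v ↦ v ᵥ* X`. -/
def mulLeftPerm (P : (Matrix m m R)ˣ) (V : Submodule R (n → R)) :
    Equiv.Perm {X : Matrix m n R // X.vecMulLinear.range = V} where
  toFun X := ⟨P.val * X.1, (range_vecMulLinear_units_mul P X.1).trans X.2⟩
  invFun X := ⟨P⁻¹.val * X.1, (range_vecMulLinear_units_mul P⁻¹ X.1).trans X.2⟩
  left_inv X := Subtype.ext (by simp [← Matrix.mul_assoc])
  right_inv X := Subtype.ext (by simp [← Matrix.mul_assoc])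

theorem setOf_units_mul_mul_eq [Fintype n] (P : (Matrix m m R)ˣ) (X : Matrix m n R)
    (Y : Matrix m l R) :
    {H : Matrix n l R | P.val * X * H = P.val * Y} = {H | X * H = Y} := by
  have mul_left_injective : Function.Injective fun Z : Matrix m l R => P.val * Z :=
    Function.LeftInverse.injective (g := fun Z => P⁻¹.val * Z) fun Z => by
      simp [← Matrix.mul_assoc]
  ext H
  simp only [Set.mem_ofPred_eq, Matrix.mul_assoc]
  exact mul_left_injective.eq_iff

end LeftMultiplication

theorem exists_units_mul_eq_of_range_vecMulLinear_eq {K m n : Type*} [DivisionRing K] [Fintype m]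
    [DecidableEq m] {X₁ X₂ : Matrix m n K}
    (range_eq : X₁.vecMulLinear.range = X₂.vecMulLinear.range) :
    ∃ P : (Matrix m m K)ˣ, P.val * X₁ = X₂ := by
  obtain ⟨e, he⟩ := exists_linearEquiv_comp_eq_of_finrank_eq rfl range_eq.symm
  refine ⟨⟨e.toLinearMap.toMatrixRight', e.symm.toLinearMap.toMatrixRight', ?_, ?_⟩, ?_⟩
  · simp [← LinearMap.toMatrixRight'_comp]
  · simp [← LinearMap.toMatrixRight'_comp]
  · apply Matrix.toLinearMapRight'.injective
    rw [Matrix.toLinearMapRight'_mul, LinearEquiv.symm_apply_apply]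
    exact he

theorem transition_matrix_symmetry_general {K l m n : Type*} [DivisionRing K] [Fintype l]
    [Fintype m] :
    (∀ X₁ X₂ : Matrix m l K, X₁.vecMulLinear.range = X₂.vecMulLinear.range →
      ∀ V : Submodule K (n → K),
        ∃ f : Equiv.Perm {Y : Matrix m n K // Y.vecMulLinear.range = V},
          ∀ Y, {H : Matrix l n K | X₁ * H = Y.1} = {H | X₂ * H = (f Y).1})
    ∧ (∀ Y₁ Y₂ : Matrix m n K, Y₁.vecMulLinear.range = Y₂.vecMulLinear.range →
      ∀ U : Submodule K (l → K),
        ∃ g : Equiv.Perm {X : Matrix m l K // X.vecMulLinear.range = U},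
          ∀ X, {H : Matrix l n K | X.1 * H = Y₁} = {H | (g X).1 * H = Y₂}) := by
  constructor
  · intro X₁ X₂ range_eq V
    obtain ⟨P, rfl⟩ := exists_units_mul_eq_of_range_vecMulLinear_eq range_eq
    exact ⟨mulLeftPerm P V, fun Y => (setOf_units_mul_mul_eq P X₁ Y.1).symm⟩
  · intro Y₁ Y₂ range_eq U
    obtain ⟨P, rfl⟩ := exists_units_mul_eq_of_range_vecMulLinear_eq range_eq
    exact ⟨mulLeftPerm P U, fun X => (setOf_units_mul_mul_eq P X.1 Y₁).symm⟩

theorem rowSpace_eq_range_vecMulLinear {K : Type} [Field K] (m n : ℕ) :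
    (rowSpace : Matrix (Fin m) (Fin n) K → Submodule K (Fin n → K)) =
      fun X => X.vecMulLinear.range :=
  funext fun X => congrArg LinearMap.range X.mulVecLin_transpose

theorem prXY_congr {K : Type} [Field K] [Fintype K] {k k' M N : ℕ}
    (pH : Matrix (Fin M) (Fin N) K → ℝ)
    {X : Matrix (Fin k) (Fin M) K} {Y : Matrix (Fin k) (Fin N) K}
    {X' : Matrix (Fin k') (Fin M) K} {Y' : Matrix (Fin k') (Fin N) K}
    (event_eq : {H : Matrix (Fin M) (Fin N) K | X * H = Y} = {H | X' * H = Y'}) :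
    prXY pH X Y = prXY pH X' Y' :=
  Finset.sum_congr rfl fun H _ => if_congr (Set.ext_iff.mp event_eq H) rfl rfl

/-- the permutation symmetry of the transition matrix of a LOC,
in rows (inputs with equal row spaces) and columns (outputs with equal row spaces). -/
theorem transition_matrix_symmetry
    {F : Type} [Field F] [Fintype F] (T M N : ℕ)
    (pH : Matrix (Fin M) (Fin N) F → ℝ) (hpH : IsPMF pH) :
    (∀ X₁ X₂ : Matrix (Fin T) (Fin M) F, rowSpace X₁ = rowSpace X₂ →
      ∀ V : Submodule F (Fin N → F),
        ∃ f : {Y : Matrix (Fin T) (Fin N) F // rowSpace Y = V} ≃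
              {Y : Matrix (Fin T) (Fin N) F // rowSpace Y = V},
          ∀ Y : {Y : Matrix (Fin T) (Fin N) F // rowSpace Y = V},
            prXY pH X₁ Y.1 = prXY pH X₂ (f Y).1)
    ∧ (∀ Y₁ Y₂ : Matrix (Fin T) (Fin N) F, rowSpace Y₁ = rowSpace Y₂ →
      ∀ U : Submodule F (Fin M → F),
        ∃ g : {X : Matrix (Fin T) (Fin M) F // rowSpace X = U} ≃
              {X : Matrix (Fin T) (Fin M) F // rowSpace X = U},
          ∀ X : {X : Matrix (Fin T) (Fin M) F // rowSpace X = U},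
            prXY pH X.1 Y₁ = prXY pH (g X).1 Y₂) := by
  rw [rowSpace_eq_range_vecMulLinear T M, rowSpace_eq_range_vecMulLinear T N]
  exact (transition_matrix_symmetry_general (l := Fin M)).imp
    (fun h X₁ X₂ hX V => (h X₁ X₂ hX V).imp fun _ hf Y => prXY_congr pH (hf Y))
    (fun h Y₁ Y₂ hY U => (h Y₁ Y₂ hY U).imp fun _ hg X => prXY_congr pH (hg X))

end
end

section
/- For any LOC(H,T), there exists an α-type input distribution on F^{T×M} that maximizes the mutual information I(X;Y) between the input X and the output Y = XH over all input PMFs on F^{T×M}. -/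
open scoped Classical
open Finset Matrix Module

noncomputable section

variable {F : Type} [Field F] [Fintype F]

/-!
For a fixed channel matrix `W`, the information `I(X;Y) = H(Y) - H(Y|X)` is a concave continuous
function of the input distribution, so it has a maximizer on the simplex of PMFs. Left
multiplication by an invertible matrix `g` sends the pair `(X, Y)` to `(gX, gY)` without changing
the channel `Y = XH`, hence it preserves `I(X;Y)`, and by concavity averaging a maximizer over the
general linear group gives another maximizer. Matrices with the same row space lie in one orbit,
so the averaged distribution is α-type.
-/

section OrbitAverage

variable {G E : Type*} [Group G] [Fintype G] [AddCommGroup E] [Module ℝ E] [DistribMulAction G E]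

variable (G) in
/-- The average of `x` over a finite group acting linearly; it projects onto the fixed points. -/
def orbitAverage (x : E) : E :=
  ∑ g : G, (Fintype.card G : ℝ)⁻¹ • g • x

theorem smul_orbitAverage [SMulCommClass G ℝ E] (g : G) (x : E) :
    g • orbitAverage G x = orbitAverage G x := by
  simp only [orbitAverage, Finset.smul_sum, smul_comm g _ (_ : E), smul_smul g]
  exact Equiv.sum_comp (Equiv.mulLeft g) fun h : G => (Fintype.card G : ℝ)⁻¹ • h • x

variable {K : Set E} {x : E}

theorem orbitAverage_mem (hK : Convex ℝ K) (hx : ∀ g : G, g • x ∈ K) : orbitAverage G x ∈ K :=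
  hK.sum_mem (fun _ _ => by positivity) (by simp) fun g _ => hx g

theorem le_map_orbitAverage {f : E → ℝ} (hf : ConcaveOn ℝ K f) (hx : ∀ g : G, g • x ∈ K)
    (hfx : ∀ g : G, f (g • x) = f x) : f x ≤ f (orbitAverage G x) := by
  have hjensen : ∑ g : G, (Fintype.card G : ℝ)⁻¹ • f (g • x) ≤ f (orbitAverage G x) :=
    hf.le_map_sum (fun _ _ => by positivity) (by simp) fun g _ => hx g
  simpa [hfx] using hjensen

end OrbitAverage

theorem exists_fixed_isMaxOn_of_concaveOn {G E : Type*} [Group G] [Finite G] [AddCommGroup E]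
    [Module ℝ E] [TopologicalSpace E] [DistribMulAction G E] [SMulCommClass G ℝ E]
    {K : Set E} {f : E → ℝ} (hne : K.Nonempty) (hcompact : IsCompact K)
    (hsemi : UpperSemicontinuousOn f K) (hconc : ConcaveOn ℝ K f)
    (hK : ∀ g : G, ∀ x ∈ K, g • x ∈ K) (hf : ∀ g : G, ∀ x ∈ K, f (g • x) = f x) :
    ∃ x ∈ K, (∀ g : G, g • x = x) ∧ IsMaxOn f K x := by
  cases nonempty_fintype G
  obtain ⟨x, hx, hmax⟩ := hsemi.exists_isMaxOn hne hcompact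
  refine ⟨orbitAverage G x, orbitAverage_mem hconc.1 fun g => hK g x hx,
    fun g => smul_orbitAverage g x, isMaxOn_iff.2 fun y hy => (hmax hy).trans ?_⟩
  exact le_map_orbitAverage hconc (fun g => hK g x hx) fun g => hf g x hx

section Pushforward

variable {Ω A : Type*} [Fintype Ω] {p : Ω → ℝ}

/-- The law of `f` when `Ω` carries the PMF `p`. -/
def pushforward (p : Ω → ℝ) (f : Ω → A) (a : A) : ℝ :=
  ∑ ω, if f ω = a then p ω else 0

theorem pushforward_nonneg (hp : 0 ≤ p) (f : Ω → A) (a : A) : 0 ≤ pushforward p f a :=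
  Finset.sum_nonneg fun ω _ => by split_ifs <;> [exact hp ω; exact le_rfl]

theorem pushforward_apply_pos (hp : 0 ≤ p) (f : Ω → A) {ω : Ω} (hω : 0 < p ω) :
    0 < pushforward p f (f ω) :=
  Finset.sum_pos' (fun ω' _ => by split_ifs <;> [exact hp ω'; exact le_rfl])
    ⟨ω, Finset.mem_univ ω, by simpa using hω⟩

theorem sum_pushforward_mul [Fintype A] (p : Ω → ℝ) (f : Ω → A) (φ : A → ℝ) :
    ∑ a, pushforward p f a * φ a = ∑ ω, p ω * φ (f ω) := by
  simp only [pushforward, Finset.sum_mul, ite_mul, zero_mul]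
  rw [Finset.sum_comm]
  simp

theorem sum_pushforward [Fintype A] (p : Ω → ℝ) (f : Ω → A) :
    ∑ a, pushforward p f a = ∑ ω, p ω := by
  simpa using sum_pushforward_mul p f 1

end Pushforward

section Entropy

variable {A B : Type*} [Fintype A] [Fintype B]

/-- Shannon entropy in nats. It is defined for every real vector, so that its concavity can be
stated on the whole nonnegative orthant. -/
def entropy (u : A → ℝ) : ℝ := ∑ a, Real.negMulLog (u a)

theorem continuous_entropy : Continuous (entropy : (A → ℝ) → ℝ) :=
  continuous_finsetSum _ fun a _ => Real.continuous_negMulLog.comp (continuous_apply a)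

theorem concaveOn_entropy : ConcaveOn ℝ (Set.Ici 0) (entropy : (A → ℝ) → ℝ) := by
  refine ⟨convex_Ici 0, fun u hu v hv a b ha hb hab => ?_⟩
  simp only [entropy, Finset.smul_sum, ← Finset.sum_add_distrib]
  exact Finset.sum_le_sum fun i _ => Real.concaveOn_negMulLog.2 (hu i) (hv i) ha hb hab

theorem entropy_comp_equiv (u : B → ℝ) (e : A ≃ B) : entropy (u ∘ e) = entropy u :=
  e.sum_comp fun b => Real.negMulLog (u b)

theorem entropy_mul_kernel (p : A → ℝ) {W : Matrix A B ℝ} (hW : ∀ a, ∑ b, W a b = 1) :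
    entropy (fun ab : A × B => p ab.1 * W ab.1 ab.2) =
      entropy p + p ⬝ᵥ fun a => entropy (W a) := by
  simp only [entropy, dotProduct, Fintype.sum_prod_type, Real.negMulLog_mul,
    Finset.sum_add_distrib, ← Finset.sum_mul, ← Finset.mul_sum, hW, one_mul]

theorem entropy_pushforward {Ω : Type*} [Fintype Ω] (p : Ω → ℝ) (f : Ω → A) :
    entropy (pushforward p f) = -∑ ω, p ω * Real.log (pushforward p f (f ω)) := by
  rw [← sum_pushforward_mul p f fun a => Real.log (pushforward p f a)]
  simp only [entropy, Real.negMulLog, neg_mul, Finset.sum_neg_distrib]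

theorem mutualInfo_eq_entropy {Ω : Type*} [Fintype Ω] {p : Ω → ℝ} (hp : 0 ≤ p)
    (f : Ω → A) (g : Ω → B) :
    mutualInfo p f g = (entropy (pushforward p f) + entropy (pushforward p g) -
      entropy (pushforward p fun ω => (f ω, g ω))) / Real.log 2 := by
  have hterm (ω : Ω) : p ω * Real.logb 2 (pushforward p (fun ω => (f ω, g ω)) (f ω, g ω) /
        (pushforward p f (f ω) * pushforward p g (g ω))) =
      (p ω * Real.log (pushforward p (fun ω => (f ω, g ω)) (f ω, g ω)) -
        p ω * Real.log (pushforward p f (f ω)) - p ω * Real.log (pushforward p g (g ω))) /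
          Real.log 2 := by
    obtain hω | hω := (hp ω).eq_or_lt
    · simp [← hω]
    have hf := pushforward_apply_pos hp f hω
    have hg := pushforward_apply_pos hp g hω
    have hfg := pushforward_apply_pos hp (fun ω => (f ω, g ω)) hω
    rw [Real.logb, Real.log_div hfg.ne' (mul_pos hf hg).ne', Real.log_mul hf.ne' hg.ne']
    ring
  have hdef : mutualInfo p f g = ∑ ω, p ω * Real.logb 2
      (pushforward p (fun ω => (f ω, g ω)) (f ω, g ω) /
        (pushforward p f (f ω) * pushforward p g (g ω))) := by
    simp only [mutualInfo, pushforward, Prod.mk.injEq]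
  rw [hdef, Finset.sum_congr rfl fun ω _ => hterm ω, ← Finset.sum_div]
  simp only [Finset.sum_sub_distrib, entropy_pushforward]
  ring

end Entropy

section ChannelInfo

variable {α β : Type*} [Fintype α] [Fintype β]

/-- The information `H(Y) - H(Y|X)`, in nats, that the channel with transition matrix `W`
(rows indexed by inputs) transmits for the input distribution `p`. -/
def channelInfo (W : Matrix α β ℝ) (p : α → ℝ) : ℝ :=
  entropy (p ᵥ* W) - p ⬝ᵥ fun a => entropy (W a)

theorem continuous_channelInfo (W : Matrix α β ℝ) : Continuous (channelInfo W) := by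
  have := continuous_entropy (A := β)
  unfold channelInfo
  fun_prop

theorem concaveOn_channelInfo {W : Matrix α β ℝ} (hW : ∀ a b, 0 ≤ W a b) :
    ConcaveOn ℝ (Set.Ici 0) (channelInfo W) := by
  have hpos : Set.Ici 0 ⊆ W.vecMulLinear ⁻¹' Set.Ici 0 := fun p hp b =>
    Finset.sum_nonneg fun a _ => mul_nonneg (hp a) (hW a b)
  have houtput := (concaveOn_entropy.comp_linearMap W.vecMulLinear).subset hpos (convex_Ici 0)
  exact houtput.sub
    (((dotProductBilin ℝ ℝ).flip fun a => entropy (W a)).convexOn (convex_Ici 0))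

theorem channelInfo_submatrix {α' β' : Type*} [Fintype α'] [Fintype β'] (W : Matrix α' β' ℝ)
    (e : α ≃ α') (e' : β ≃ β') (p : α' → ℝ) :
    channelInfo (W.submatrix e e') (p ∘ e) = channelInfo W p := by
  have hcond : (fun a => entropy (W.submatrix e e' a)) = (fun a => entropy (W a)) ∘ e :=
    funext fun a => entropy_comp_equiv (W (e a)) e'
  rw [channelInfo, hcond, comp_equiv_dotProduct_comp_equiv, submatrix_vecMul_equiv,
    entropy_comp_equiv, Function.comp_assoc, e.self_comp_symm, Function.comp_id, channelInfo]

theorem channelInfo_comp_smul {G : Type*} [Group G] [MulAction G α] [MulAction G β]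
    {W : Matrix α β ℝ} (hWG : ∀ (g : G) a b, W (g • a) (g • b) = W a b) (g : G) (p : α → ℝ) :
    channelInfo W (fun a => p (g • a)) = channelInfo W p := by
  have hW : W.submatrix (MulAction.toPerm g) (MulAction.toPerm g) = W := Matrix.ext (hWG g)
  conv_lhs => rw [← hW]
  exact channelInfo_submatrix W (MulAction.toPerm g) (MulAction.toPerm g) p

theorem exists_invariant_isMaxOn_channelInfo (G : Type*) [Group G] [Finite G] [MulAction G α]
    [MulAction G β] [Nonempty α] {W : Matrix α β ℝ} (hW : ∀ a b, 0 ≤ W a b)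
    (hWG : ∀ (g : G) a b, W (g • a) (g • b) = W a b) :
    ∃ p ∈ stdSimplex ℝ α, (∀ (g : G) a, p (g • a) = p a) ∧
      IsMaxOn (channelInfo W) (stdSimplex ℝ α) p := by
  obtain ⟨a₀⟩ := ‹Nonempty α›
  have hsimplex (g : Gᵈᵐᵃ) (p : α → ℝ) (hp : p ∈ stdSimplex ℝ α) : g • p ∈ stdSimplex ℝ α :=
    ⟨fun _ => hp.1 _, (Equiv.sum_comp (MulAction.toPerm (DomMulAct.mk.symm g)) p).trans hp.2⟩
  have : Finite Gᵈᵐᵃ := Finite.of_equiv G DomMulAct.mk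
  obtain ⟨p, hp, hfix, hmax⟩ := exists_fixed_isMaxOn_of_concaveOn (G := Gᵈᵐᵃ)
    ⟨_, single_mem_stdSimplex ℝ a₀⟩ (isCompact_stdSimplex ℝ α)
    (continuous_channelInfo W).continuousOn.upperSemicontinuousOn
    ((concaveOn_channelInfo hW).subset (fun _ hp => hp.1) (convex_stdSimplex ℝ α))
    hsimplex fun g p _ => channelInfo_comp_smul hWG (DomMulAct.mk.symm g) p
  exact ⟨p, hp, fun g a => congrFun (hfix (DomMulAct.mk g)) a, hmax⟩

end ChannelInfo

section NoiseChannel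

variable {α η β : Type*} [Fintype η]

/-- The transition matrix of the channel `Y = φ(X, Z)` whose noise `Z` has law `q` and is
independent of the input. -/
def noiseChannel (q : η → ℝ) (φ : α → η → β) : Matrix α β ℝ :=
  Matrix.of fun a => pushforward q (φ a)

theorem noiseChannel_nonneg {q : η → ℝ} (hq : 0 ≤ q) (φ : α → η → β) (a : α) (b : β) :
    0 ≤ noiseChannel q φ a b :=
  pushforward_nonneg hq (φ a) b

theorem noiseChannel_smul_smul {G : Type*} [Group G] [MulAction G α] [MulAction G β]
    (q : η → ℝ) {φ : α → η → β} (hφ : ∀ (g : G) a z, φ (g • a) z = g • φ a z)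
    (g : G) (a : α) (b : β) : noiseChannel q φ (g • a) (g • b) = noiseChannel q φ a b := by
  simp only [noiseChannel, of_apply, pushforward, hφ, smul_left_cancel_iff]

theorem sum_noiseChannel [Fintype β] {q : η → ℝ} (hq : IsPMF q) (φ : α → η → β) (a : α) :
    ∑ b, noiseChannel q φ a b = 1 :=
  (sum_pushforward q (φ a)).trans hq.2

variable [Fintype α]

theorem pushforward_prod_fst {q : η → ℝ} (hq : IsPMF q) (p : α → ℝ) :
    pushforward (fun ω : α × η => p ω.1 * q ω.2) Prod.fst = p := by
  ext a
  simp only [pushforward, Fintype.sum_prod_type]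
  rw [Finset.sum_comm]
  simp [← Finset.mul_sum, hq.2]

theorem pushforward_prod_input_output (p : α → ℝ) (q : η → ℝ) (φ : α → η → β) :
    pushforward (fun ω : α × η => p ω.1 * q ω.2) (fun ω => (ω.1, φ ω.1 ω.2)) =
      fun ab : α × β => p ab.1 * noiseChannel q φ ab.1 ab.2 := by
  ext ⟨a, b⟩
  simp only [pushforward, noiseChannel, of_apply, Fintype.sum_prod_type, Prod.mk.injEq, ite_and,
    Finset.mul_sum, mul_ite, mul_zero]
  rw [Finset.sum_comm]
  simp

theorem pushforward_prod_output (p : α → ℝ) (q : η → ℝ) (φ : α → η → β) :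
    pushforward (fun ω : α × η => p ω.1 * q ω.2) (fun ω => φ ω.1 ω.2) =
      p ᵥ* noiseChannel q φ := by
  ext b
  simp only [pushforward, noiseChannel, of_apply, Fintype.sum_prod_type, vecMul, dotProduct,
    Finset.mul_sum, mul_ite, mul_zero]

theorem mutualInfo_input_output [Fintype β] {p : α → ℝ} {q : η → ℝ} (hp : 0 ≤ p) (hq : IsPMF q)
    (φ : α → η → β) :
    mutualInfo (fun ω : α × η => p ω.1 * q ω.2) Prod.fst (fun ω => φ ω.1 ω.2) =
      channelInfo (noiseChannel q φ) p / Real.log 2 := by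
  have hpq : 0 ≤ fun ω : α × η => p ω.1 * q ω.2 := fun ω => mul_nonneg (hp ω.1) (hq.1 ω.2)
  rw [mutualInfo_eq_entropy hpq, pushforward_prod_fst hq,
    pushforward_prod_input_output, pushforward_prod_output,
    entropy_mul_kernel p (sum_noiseChannel hq φ), channelInfo]
  ring

theorem exists_invariant_mutualInfo_maximizer [Finite β] [Nonempty α] (G : Type*) [Group G]
    [Finite G] [MulAction G α] [MulAction G β] {q : η → ℝ} (hq : IsPMF q) {φ : α → η → β}
    (hφ : ∀ (g : G) a z, φ (g • a) z = g • φ a z) :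
    ∃ p : α → ℝ, IsPMF p ∧ (∀ (g : G) a, p (g • a) = p a) ∧ ∀ p' : α → ℝ, IsPMF p' →
      mutualInfo (fun ω : α × η => p' ω.1 * q ω.2) Prod.fst (fun ω => φ ω.1 ω.2) ≤
        mutualInfo (fun ω : α × η => p ω.1 * q ω.2) Prod.fst (fun ω => φ ω.1 ω.2) := by
  cases nonempty_fintype β
  obtain ⟨p, hp, hinv, hmax⟩ := exists_invariant_isMaxOn_channelInfo G
    (noiseChannel_nonneg hq.1 φ) (noiseChannel_smul_smul q hφ)
  refine ⟨p, hp, hinv, fun p' hp' => ?_⟩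
  rw [mutualInfo_input_output hp.1 hq, mutualInfo_input_output hp'.1 hq]
  exact div_le_div_of_nonneg_right (hmax hp') (Real.log_nonneg one_le_two)

end NoiseChannel

theorem exists_linearEquiv_range_prod_ker {K V W : Type*} [DivisionRing K] [AddCommGroup V]
    [Module K V] [AddCommGroup W] [Module K W] (f : V →ₗ[K] W) :
    ∃ e : V ≃ₗ[K] LinearMap.range f × LinearMap.ker f, ∀ v, ((e v).1 : W) = f v := by
  obtain ⟨C, hC⟩ := (LinearMap.ker f).exists_isCompl
  exact ⟨LinearMap.equivProdOfSurjectiveOfIsCompl f.rangeRestrict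
    (Submodule.projectionOnto _ _ hC) f.range_rangeRestrict (by simp) (by simpa using hC),
    fun _ => rfl⟩

theorem exists_linearEquiv_comp_eq_of_range_eq_s5 {K V W : Type*} [DivisionRing K] [AddCommGroup V]
    [Module K V] [FiniteDimensional K V] [AddCommGroup W] [Module K W] {f g : V →ₗ[K] W}
    (h : LinearMap.range f = LinearMap.range g) :
    ∃ e : V ≃ₗ[K] V, f ∘ₗ e.toLinearMap = g := by
  obtain ⟨e₁, h₁⟩ := exists_linearEquiv_range_prod_ker f
  obtain ⟨e₂, h₂⟩ := exists_linearEquiv_range_prod_ker g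
  have hker : finrank K (LinearMap.ker f) = finrank K (LinearMap.ker g) := by
    have hf := f.finrank_range_add_finrank_ker
    have hg := g.finrank_range_add_finrank_ker
    rw [h] at hf
    omega
  refine ⟨e₂ ≪≫ₗ (LinearEquiv.prodCongr (LinearEquiv.ofEq _ _ h)
    (LinearEquiv.ofFinrankEq _ _ hker)).symm ≪≫ₗ e₁.symm, LinearMap.ext fun v => ?_⟩
  simp [← h₁, ← h₂]

/-- Left multiplication as an action of the square matrices on the rectangular ones. It is only a
local instance, since it duplicates the multiplication action when `m = n`. -/
abbrev leftMulAction {m n R : Type*} [Fintype m] [DecidableEq m] [Semiring R] :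
    MulAction (Matrix m m R) (Matrix m n R) where
  smul A X := A * X
  one_smul := Matrix.one_mul
  mul_smul := Matrix.mul_assoc

attribute [local instance] leftMulAction

theorem exists_units_smul_eq_of_rowSpace_eq {F : Type} [Field F] {T M : ℕ}
    {X X' : Matrix (Fin T) (Fin M) F}
    (h : rowSpace X = rowSpace X') :
    ∃ g : (Matrix (Fin T) (Fin T) F)ˣ, g • X = X' := by
  obtain ⟨e, he⟩ := exists_linearEquiv_comp_eq_of_range_eq_s5 h
  have hmul : Xᵀ * LinearMap.toMatrix' e.toLinearMap = X'ᵀ := by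
    apply Matrix.toLin'.injective
    rwa [Matrix.toLin'_mul, Matrix.toLin'_toMatrix']
  have hunit : IsUnit (LinearMap.toMatrix' e.toLinearMap)ᵀ := by
    rw [Matrix.isUnit_transpose, LinearMap.isUnit_toMatrix'_iff]
    exact (Module.End.isUnit_iff _).2 e.bijective
  refine ⟨hunit.unit, Matrix.transpose_injective ?_⟩
  rw [← hmul]
  exact Matrix.transpose_mul _ _

/-- there exists an α-type input distribution maximizing I(X;Y). -/
theorem exists_alpha_type_capacity_achieving
    {F : Type} [Field F] [Fintype F] (T M N : ℕ)
    (pH : Matrix (Fin M) (Fin N) F → ℝ) (hpH : IsPMF pH) :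
    ∃ pX : Matrix (Fin T) (Fin M) F → ℝ, IsPMF pX ∧ IsAlphaType pX ∧
      ∀ pX' : Matrix (Fin T) (Fin M) F → ℝ, IsPMF pX' →
        miXY pX' pH ≤ miXY pX pH := by
  obtain ⟨pX, hpX, hinv, hmax⟩ :=
    exists_invariant_mutualInfo_maximizer (Matrix (Fin T) (Fin T) F)ˣ hpH
      (φ := fun (X : Matrix (Fin T) (Fin M) F) H => X * H)
      fun g X H => Matrix.mul_assoc (g : Matrix (Fin T) (Fin T) F) X H
  refine ⟨pX, hpX, fun X X' hXX' => ?_, hmax⟩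
  obtain ⟨g, rfl⟩ := exists_units_smul_eq_of_rowSpace_eq hXX'
  exact (hinv g X).symm

end
end

section
/- For LOC(H,T) with any α-type input distribution, I(X;Y) ≤ J(rank(X);rank(Y)) + I(⟨X^T⟩;⟨Y^T⟩) + ∑_{r,s} Pr{rank(X)=r, rank(Y)=s} · log₂ χ_r[s], where Y = XH. -/
open scoped Classical
open Finset Matrix Module

noncomputable section

variable {F : Type} [Field F] [Fintype F]

/-!
The row space `⟨Yᵀ⟩` is a function of `Y`, so `I(X;Y) = I(X;⟨Yᵀ⟩) + I(X;Y|⟨Yᵀ⟩)`. Since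
`⟨(XH)ᵀ⟩ = Hᵀ⟨Xᵀ⟩` depends on `X` only through `⟨Xᵀ⟩` and `H` is independent of `X`, the first term
is `I(⟨Xᵀ⟩;⟨Yᵀ⟩)`. The second is at most `H(Y|⟨Yᵀ⟩)`, hence at most the mean logarithm of the number
of `T × N` matrices with row space `⟨Yᵀ⟩`. This number is `χ_T[rank Y]`, and
`log χ_T[s] = log (χ_T[s] / χ_r[s]) + log χ_r[s]`.
-/

section Law

variable {Ω A B : Type*} [Fintype Ω]

/-- The law of `f` when the sample point has weights `p`, as a function on the codomain of `f`. -/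
def law (p : Ω → ℝ) (f : Ω → A) (a : A) : ℝ := ∑ ω, if f ω = a then p ω else 0

theorem law_nonneg {p : Ω → ℝ} (hp : ∀ ω, 0 ≤ p ω) (f : Ω → A) (a : A) : 0 ≤ law p f a :=
  sum_nonneg fun ω _ ↦ ite_nonneg (hp ω) le_rfl

theorem law_pos {p : Ω → ℝ} (hp : ∀ ω, 0 ≤ p ω) (f : Ω → A) {ω : Ω} (hω : 0 < p ω) :
    0 < law p f (f ω) :=
  sum_pos' (fun ω' _ ↦ ite_nonneg (hp ω') le_rfl) ⟨ω, mem_univ ω, by simpa using hω⟩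

theorem law_le_law_comp {p : Ω → ℝ} (hp : ∀ ω, 0 ≤ p ω) (f : Ω → A) (φ : A → B) (a : A) :
    law p f a ≤ law p (φ ∘ f) (φ a) := by
  refine sum_le_sum fun ω _ ↦ ?_
  by_cases h : f ω = a
  · simp [h]
  · simpa [h] using ite_nonneg (hp ω) le_rfl

theorem sum_law_mul_of_mapsTo (p : Ω → ℝ) {f : Ω → A} {S : Finset A} (hf : ∀ ω, f ω ∈ S)
    (h : A → ℝ) : ∑ a ∈ S, law p f a * h a = ∑ ω, p ω * h (f ω) := by
  simp_rw [law, sum_mul]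
  rw [sum_comm]
  simp [hf]

theorem law_law [Fintype A] (p : Ω → ℝ) (f : Ω → A) (φ : A → B) :
    law (law p f) φ = law p (φ ∘ f) := by
  funext b
  simpa [law] using
    sum_law_mul_of_mapsTo p (fun ω ↦ mem_univ (f ω)) fun a ↦ if φ a = b then 1 else 0

theorem mutualInfo_eq_sum_law (p : Ω → ℝ) (f : Ω → A) (g : Ω → B) :
    mutualInfo p f g = ∑ ω, p ω * Real.logb 2
      (law p (fun ω ↦ (f ω, g ω)) (f ω, g ω) / (law p f (f ω) * law p g (g ω))) := by
  simp only [mutualInfo, law, Prod.mk.injEq]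

end Law

section ConditionalEntropy

variable {Ω A B C : Type*} [Fintype Ω]

theorem sum_mul_logb_div_nonpos {b : ℝ} (hb : 1 < b) {P Q : Ω → ℝ} (hP : ∀ ω, 0 ≤ P ω)
    (hQ : ∀ ω, 0 ≤ Q ω) (hQP : ∀ ω, Q ω = 0 → P ω = 0) (hsum : ∑ ω, Q ω ≤ ∑ ω, P ω) :
    ∑ ω, P ω * Real.logb b (Q ω / P ω) ≤ 0 := by
  have hterm (ω : Ω) : P ω * Real.log (Q ω / P ω) ≤ Q ω - P ω := by
    rcases (hP ω).eq_or_lt with hPω | hPω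
    · simpa [← hPω] using hQ ω
    have hQω : 0 < Q ω := (hQ ω).lt_of_ne' fun h ↦ hPω.ne' (hQP ω h)
    calc P ω * Real.log (Q ω / P ω) ≤ P ω * (Q ω / P ω - 1) := by
          gcongr
          exact Real.log_le_sub_one_of_pos (div_pos hQω hPω)
      _ = Q ω - P ω := by field_simp
  simp_rw [Real.logb, ← mul_div_assoc]
  rw [← sum_div]
  refine div_nonpos_of_nonpos_of_nonneg ?_ (Real.log_pos hb).le
  calc ∑ ω, P ω * Real.log (Q ω / P ω) ≤ ∑ ω, (Q ω - P ω) := sum_le_sum fun ω _ ↦ hterm ω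
    _ ≤ 0 := by rwa [sum_sub_distrib, sub_nonpos]

theorem card_fiber_ne_zero (φ : Ω → A) (ω : Ω) : (#{ω' | φ ω' = φ ω} : ℝ) ≠ 0 :=
  Nat.cast_ne_zero.mpr (card_ne_zero_of_mem (mem_filter.mpr ⟨mem_univ ω, rfl⟩))

theorem sum_law_div_card_fiber (P : Ω → ℝ) (φ : Ω → A) :
    ∑ ω, law P φ (φ ω) / #{ω' | φ ω' = φ ω} = ∑ ω, P ω := by
  simp_rw [law, sum_div]
  rw [sum_comm]
  refine sum_congr rfl fun ω _ ↦ ?_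
  calc ∑ ω', (if φ ω = φ ω' then P ω else 0) / (#{ω'' | φ ω'' = φ ω'} : ℝ)
      = ∑ ω' with φ ω' = φ ω, P ω / (#{ω'' | φ ω'' = φ ω} : ℝ) := by
        rw [sum_filter]
        refine sum_congr rfl fun ω' _ ↦ ?_
        by_cases h : φ ω' = φ ω
        · simp [h]
        · simp [h, Ne.symm h]
    _ = P ω := by
        rw [sum_const, nsmul_eq_mul, mul_div_cancel₀ _ (card_fiber_ne_zero φ ω)]

/-- Gibbs' inequality against the law that has the same image under `φ` as `P` and is uniform on
each fibre of `φ`. -/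
theorem sum_mul_logb_law_div_le {b : ℝ} (hb : 1 < b) {P : Ω → ℝ} (hP : ∀ ω, 0 ≤ P ω)
    (φ : Ω → A) :
    ∑ ω, P ω * Real.logb b (law P φ (φ ω) / P ω)
      ≤ ∑ ω, P ω * Real.logb b #{ω' | φ ω' = φ ω} := by
  set Q : Ω → ℝ := fun ω ↦ law P φ (φ ω) / #{ω' | φ ω' = φ ω}
  have hQP (ω : Ω) (hQω : Q ω = 0) : P ω = 0 := by
    have hlaw : law P φ (φ ω) = 0 := by simpa [Q, card_fiber_ne_zero φ ω] using hQω
    exact (hP ω).eq_of_not_lt' fun hPω ↦ (law_pos hP φ hPω).ne' hlaw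
  have hgibbs : ∑ ω, P ω * Real.logb b (Q ω / P ω) ≤ 0 :=
    sum_mul_logb_div_nonpos hb hP (fun ω ↦ div_nonneg (law_nonneg hP φ _) (Nat.cast_nonneg _))
      hQP (sum_law_div_card_fiber P φ).le
  have hsplit (ω : Ω) : P ω * Real.logb b (law P φ (φ ω) / P ω)
      = P ω * Real.logb b #{ω' | φ ω' = φ ω} + P ω * Real.logb b (Q ω / P ω) := by
    rcases (hP ω).eq_or_lt with hPω | hPω
    · simp [← hPω]
    have hcard := card_fiber_ne_zero φ ω
    have hQω : Q ω ≠ 0 := fun h ↦ hPω.ne' (hQP ω h)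
    rw [← mul_add, ← Real.logb_mul hcard (div_ne_zero hQω hPω.ne'), ← mul_div_assoc,
      mul_div_cancel₀ _ hcard]
  simp_rw [hsplit, sum_add_distrib]
  linarith

theorem sum_mul_logb_law_comp_div_law_le [Fintype B] {b : ℝ} (hb : 1 < b) {p : Ω → ℝ}
    (hp : ∀ ω, 0 ≤ p ω) (Y : Ω → B) (φ : B → C) :
    ∑ ω, p ω * Real.logb b (law p (φ ∘ Y) (φ (Y ω)) / law p Y (Y ω))
      ≤ ∑ ω, p ω * Real.logb b #{y | φ y = φ (Y ω)} := by
  have h := sum_mul_logb_law_div_le hb (law_nonneg hp Y) φ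
  rwa [law_law, sum_law_mul_of_mapsTo p fun ω ↦ mem_univ (Y ω),
    sum_law_mul_of_mapsTo p fun ω ↦ mem_univ (Y ω)] at h

/-- The difference of the two informations is `I(X; Y | φ(Y))`, which is at most `H(Y | φ(Y))`. -/
theorem mutualInfo_le_mutualInfo_comp_add [Fintype B] {p : Ω → ℝ} (hp : ∀ ω, 0 ≤ p ω)
    (X : Ω → A) (Y : Ω → B) (φ : B → C) :
    mutualInfo p X Y
      ≤ mutualInfo p X (φ ∘ Y) + ∑ ω, p ω * Real.logb 2 #{y | φ y = φ (Y ω)} := by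
  refine le_trans ?_ (add_le_add_right (sum_mul_logb_law_comp_div_law_le one_lt_two hp Y φ) _)
  rw [mutualInfo_eq_sum_law, mutualInfo_eq_sum_law, ← sum_add_distrib]
  refine sum_le_sum fun ω _ ↦ ?_
  rcases (hp ω).eq_or_lt with hω | hω
  · simp [← hω]
  rw [← mul_add]
  refine mul_le_mul_of_nonneg_left ?_ (hp ω)
  have hX : 0 < law p X (X ω) := law_pos hp X hω
  have hY : 0 < law p Y (Y ω) := law_pos hp Y hω
  have hV : 0 < law p (φ ∘ Y) (φ (Y ω)) := law_pos hp (φ ∘ Y) hω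
  have hXY : 0 < law p (fun ω ↦ (X ω, Y ω)) (X ω, Y ω) := law_pos hp (fun ω ↦ (X ω, Y ω)) hω
  have hle : law p (fun ω ↦ (X ω, Y ω)) (X ω, Y ω)
      ≤ law p (fun ω ↦ (X ω, (φ ∘ Y) ω)) (X ω, φ (Y ω)) :=
    law_le_law_comp hp (fun ω ↦ (X ω, Y ω)) (Prod.map id φ) (X ω, Y ω)
  have hXV := hXY.trans_le hle
  rw [Function.comp_apply, ← Real.logb_mul (by positivity) (by positivity)]
  refine Real.logb_le_logb_of_le one_lt_two (by positivity) ?_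
  calc law p (fun ω ↦ (X ω, Y ω)) (X ω, Y ω) / (law p X (X ω) * law p Y (Y ω))
      ≤ law p (fun ω ↦ (X ω, (φ ∘ Y) ω)) (X ω, φ (Y ω)) / (law p X (X ω) * law p Y (Y ω)) := by
        gcongr
    _ = law p (fun ω ↦ (X ω, (φ ∘ Y) ω)) (X ω, φ (Y ω))
          / (law p X (X ω) * law p (φ ∘ Y) (φ (Y ω)))
          * (law p (φ ∘ Y) (φ (Y ω)) / law p Y (Y ω)) := by field_simp

end ConditionalEntropy

section Channel

variable {A K C V : Type*}

/-- The joint weights of an input and an independent channel state; `jointPMF` is the case of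
matrices. -/
def prodWeight (pA : A → ℝ) (pK : K → ℝ) : A × K → ℝ := fun ω ↦ pA ω.1 * pK ω.2

theorem prodWeight_nonneg {pA : A → ℝ} {pK : K → ℝ} (hA : ∀ a, 0 ≤ pA a) (hK : ∀ k, 0 ≤ pK k)
    (ω : A × K) : 0 ≤ prodWeight pA pK ω :=
  mul_nonneg (hA ω.1) (hK ω.2)

variable [Fintype A] [Fintype K]

theorem law_prodWeight_fst (pA : A → ℝ) {pK : K → ℝ} (hK : ∑ k, pK k = 1) (f : A → C) (c : C) :
    law (prodWeight pA pK) (fun ω ↦ f ω.1) c = law pA f c := by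
  simp only [law, prodWeight, Fintype.sum_prod_type]
  refine sum_congr rfl fun a _ ↦ ?_
  split_ifs
  · rw [← mul_sum, hK, mul_one]
  · exact sum_const_zero

theorem law_prodWeight_prodMk (pA : A → ℝ) (pK : K → ℝ) (f : A → C) (g : C → K → V) (c : C)
    (v : V) :
    law (prodWeight pA pK) (fun ω ↦ (f ω.1, g (f ω.1) ω.2)) (c, v)
      = law pA f c * law pK (g c) v := by
  simp only [law, prodWeight, Fintype.sum_prod_type, sum_mul_sum, Prod.mk.injEq]
  refine sum_congr rfl fun a _ ↦ sum_congr rfl fun k _ ↦ ?_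
  by_cases hc : f a = c
  · simp [hc]
  · simp [hc]

theorem mutualInfo_prodWeight {pA : A → ℝ} (hA : ∀ a, 0 ≤ pA a) {pK : K → ℝ} (hK : ∑ k, pK k = 1)
    (f : A → C) (g : C → K → V) :
    mutualInfo (prodWeight pA pK) (fun ω ↦ f ω.1) (fun ω ↦ g (f ω.1) ω.2)
      = ∑ ω, prodWeight pA pK ω * Real.logb 2
          (law pK (g (f ω.1)) (g (f ω.1) ω.2)
            / law (prodWeight pA pK) (fun ω ↦ g (f ω.1) ω.2) (g (f ω.1) ω.2)) := by
  rw [mutualInfo_eq_sum_law]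
  refine sum_congr rfl fun ω _ ↦ ?_
  rcases (hA ω.1).eq_or_lt with hω | hω
  · simp [prodWeight, ← hω]
  rw [law_prodWeight_prodMk, law_prodWeight_fst pA hK, mul_div_mul_left _ _ (law_pos hA f hω).ne']

theorem mutualInfo_prodWeight_fst_eq {pA : A → ℝ} (hA : ∀ a, 0 ≤ pA a) {pK : K → ℝ}
    (hK : ∑ k, pK k = 1) (f : A → C) (g : C → K → V) :
    mutualInfo (prodWeight pA pK) (fun ω ↦ ω.1) (fun ω ↦ g (f ω.1) ω.2)
      = mutualInfo (prodWeight pA pK) (fun ω ↦ f ω.1) (fun ω ↦ g (f ω.1) ω.2) :=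
  (mutualInfo_prodWeight hA hK id (g ∘ f)).trans (mutualInfo_prodWeight hA hK f g).symm

end Channel

section RowSpace

variable {K : Type} [Field K] {T M N : ℕ}

theorem rowSpace_mul (X : Matrix (Fin T) (Fin M) K) (H : Matrix (Fin M) (Fin N) K) :
    rowSpace (X * H) = (rowSpace X).map Hᵀ.mulVecLin := by
  rw [rowSpace, colSpace, transpose_mul, mulVecLin_mul, LinearMap.range_comp]
  rfl

theorem finrank_rowSpace (Y : Matrix (Fin T) (Fin N) K) : finrank K (rowSpace Y) = Y.rank :=
  Y.rank_transpose

theorem rowSpace_eq_span_row (Y : Matrix (Fin T) (Fin N) K) :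
    rowSpace Y = Submodule.span K (Set.range Y.row) :=
  range_mulVecLin Yᵀ

theorem exists_mul_eq_of_rowSpace_le {Y : Matrix (Fin T) (Fin N) K} {B : Matrix (Fin M) (Fin N) K}
    (h : rowSpace Y ≤ rowSpace B) : ∃ A : Matrix (Fin T) (Fin M) K, A * B = Y := by
  have hrow (i : Fin T) : ∃ a : Fin M → K, Bᵀ *ᵥ a = Y i :=
    h (rowSpace_eq_span_row Y ▸ Submodule.subset_span ⟨i, rfl⟩)
  choose a ha using hrow
  refine ⟨of a, funext fun i ↦ ?_⟩
  rw [← ha i, mulVec_transpose]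
  rfl

theorem rowSpace_mul_of_rank_eq {A : Matrix (Fin T) (Fin M) K} (hA : A.rank = M)
    (B : Matrix (Fin M) (Fin N) K) : rowSpace (A * B) = rowSpace B := by
  have htop : rowSpace A = ⊤ := Submodule.eq_top_of_finrank_eq (by simp [finrank_rowSpace, hA])
  rw [rowSpace_mul, htop, Submodule.map_top]
  rfl

theorem linearIndependent_col_iff_rank_eq (A : Matrix (Fin T) (Fin M) K) :
    LinearIndependent K A.col ↔ A.rank = M := by
  rw [linearIndependent_iff_card_eq_finrank_span, Fintype.card_fin, rank_eq_finrank_span_cols,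
    eq_comm]
  rfl

theorem exists_linearIndependent_row_rowSpace_eq (W : Submodule K (Fin N → K)) :
    ∃ B : Matrix (Fin (finrank K W)) (Fin N) K, LinearIndependent K B.row ∧ rowSpace B = W := by
  let b := finBasis K W
  refine ⟨of fun j ↦ (b j : Fin N → K), b.linearIndependent.map' W.subtype W.ker_subtype, ?_⟩
  rw [rowSpace_eq_span_row]
  calc Submodule.span K (Set.range (W.subtype ∘ b))
      = (Submodule.span K (Set.range b)).map W.subtype := by
        rw [Submodule.map_span, Set.range_comp]
    _ = W := by rw [b.span_eq, Submodule.map_subtype_top]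

variable [Fintype K]

theorem card_rank_eq_width (h : M ≤ T) :
    #{A : Matrix (Fin T) (Fin M) K | A.rank = M} = chi (Fintype.card K) T M := by
  have e : {A : Matrix (Fin T) (Fin M) K // A.rank = M}
      ≃ {v : Fin M → Fin T → K // LinearIndependent K v} :=
    (Equiv.piComm _).subtypeEquiv fun A ↦ (linearIndependent_col_iff_rank_eq A).symm
  rw [← Fintype.card_subtype, ← Nat.card_eq_fintype_card, Nat.card_congr e,
    card_linearIndependent (by simpa using h), finrank_fin_fun, chi, prod_range]

/-- The matrices with the row space of `B` are the products `A * B` with `A` of full column rank. -/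
theorem card_rowSpace_eq_rowSpace {B : Matrix (Fin M) (Fin N) K} (hB : LinearIndependent K B.row)
    (h : M ≤ T) :
    #{Y : Matrix (Fin T) (Fin N) K | rowSpace Y = rowSpace B} = chi (Fintype.card K) T M := by
  rw [← card_rank_eq_width h]
  symm
  refine card_bij (fun A _ ↦ A * B) (fun A hA ↦ ?_) (fun A _ A' _ hAA' ↦ ?_) (fun Y hY ↦ ?_)
  · rw [mem_filter_univ] at hA ⊢
    exact rowSpace_mul_of_rank_eq hA B
  · exact funext fun i ↦ vecMul_injective_iff.mpr hB (congrFun hAA' i)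
  · rw [mem_filter_univ] at hY
    obtain ⟨A, rfl⟩ := exists_mul_eq_of_rowSpace_le hY.le
    have hrank : M ≤ A.rank :=
      calc M = (A * B).rank := by
            rw [← finrank_rowSpace, hY, finrank_rowSpace, hB.rank_matrix, Fintype.card_fin]
        _ ≤ A.rank := rank_mul_le_left A B
    exact ⟨A, (mem_filter_univ A).mpr (A.rank_le_width.antisymm hrank), rfl⟩

theorem card_rowSpace_eq (W : Submodule K (Fin N → K)) (hW : finrank K W ≤ T) :
    #{Y : Matrix (Fin T) (Fin N) K | rowSpace Y = W} = chi (Fintype.card K) T (finrank K W) := by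
  obtain ⟨B, hB, hBW⟩ := exists_linearIndependent_row_rowSpace_eq W
  simpa only [hBW] using card_rowSpace_eq_rowSpace hB hW

end RowSpace

theorem chi_pos {q m r : ℕ} (hq : 1 < q) (h : r ≤ m) : 0 < chi q m r :=
  prod_pos fun _ hi ↦ tsub_pos_of_lt (Nat.pow_lt_pow_right hq ((mem_range.mp hi).trans_le h))

section RankExpectations

variable {T M N : ℕ} (pX : Matrix (Fin T) (Fin M) F → ℝ) (pH : Matrix (Fin M) (Fin N) F → ℝ)

theorem sum_prRankXY_mul (h : ℕ → ℕ → ℝ) :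
    ∑ r ∈ range (T + 1), ∑ s ∈ range (T + 1), prRankXY pX pH r s * h r s
      = ∑ ω, jointPMF pX pH ω * h ω.1.rank (ω.1 * ω.2).rank := by
  have hlaw (r s : ℕ) : prRankXY pX pH r s
      = law (jointPMF pX pH) (fun ω ↦ (ω.1.rank, (ω.1 * ω.2).rank)) (r, s) := by
    simp [prRankXY, law]
  have hmem (ω : Matrix (Fin T) (Fin M) F × Matrix (Fin M) (Fin N) F) :
      (ω.1.rank, (ω.1 * ω.2).rank) ∈ range (T + 1) ×ˢ range (T + 1) := by
    simp [rank_le_height]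
  rw [← sum_law_mul_of_mapsTo (jointPMF pX pH) hmem fun rs ↦ h rs.1 rs.2, sum_product]
  simp only [hlaw]

theorem Jrank_add_sum_prRankXY_mul_logb_chi {q : ℕ} (hq : 1 < q) :
    Jrank q pX pH
        + ∑ r ∈ range (T + 1), ∑ s ∈ range (T + 1), prRankXY pX pH r s * Real.logb 2 (chi q r s)
      = ∑ ω, jointPMF pX pH ω * Real.logb 2 (chi q T (ω.1 * ω.2).rank) := by
  rw [Jrank, sum_prRankXY_mul pX pH fun r s ↦ Real.logb 2 ((chi q T s : ℝ) / chi q r s),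
    sum_prRankXY_mul pX pH fun r s ↦ Real.logb 2 (chi q r s), ← sum_add_distrib]
  refine sum_congr rfl fun ω _ ↦ ?_
  have hT : (chi q T (ω.1 * ω.2).rank : ℝ) ≠ 0 :=
    Nat.cast_ne_zero.mpr (chi_pos hq (rank_le_height _)).ne'
  have hX : (chi q ω.1.rank (ω.1 * ω.2).rank : ℝ) ≠ 0 :=
    Nat.cast_ne_zero.mpr (chi_pos hq (rank_mul_le_left _ _)).ne'
  rw [Real.logb_div hT hX, ← mul_add, sub_add_cancel]

end RankExpectations

theorem alpha_type_upper_bound_general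
    {F : Type} [Field F] [Fintype F] (q T M N : ℕ) (hq : Fintype.card F = q)
    (pH : Matrix (Fin M) (Fin N) F → ℝ) (hpH : IsPMF pH)
    (pX : Matrix (Fin T) (Fin M) F → ℝ) (hpX : IsPMF pX) :
    miXY pX pH
      ≤ Jrank q pX pH + miRowRow pX pH
        + ∑ r ∈ Finset.range (T + 1), ∑ s ∈ Finset.range (T + 1),
            prRankXY pX pH r s * Real.logb 2 (chi q r s : ℝ) := by
  have hcard (Y : Matrix (Fin T) (Fin N) F) :
      #{Y' : Matrix (Fin T) (Fin N) F | rowSpace Y' = rowSpace Y} = chi q T Y.rank := by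
    rw [card_rowSpace_eq _ ((finrank_rowSpace Y).trans_le Y.rank_le_height), finrank_rowSpace, hq]
  have hrow : mutualInfo (jointPMF pX pH) (fun ω ↦ ω.1) (fun ω ↦ rowSpace (ω.1 * ω.2))
      = miRowRow pX pH := by
    simp only [miRowRow, rowSpace_mul]
    exact mutualInfo_prodWeight_fst_eq hpX.1 hpH.2 rowSpace fun U H ↦ U.map Hᵀ.mulVecLin
  calc miXY pX pH
      ≤ mutualInfo (jointPMF pX pH) (fun ω ↦ ω.1) (fun ω ↦ rowSpace (ω.1 * ω.2))
        + ∑ ω, jointPMF pX pH ω * Real.logb 2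
          #{Y' : Matrix (Fin T) (Fin N) F | rowSpace Y' = rowSpace (ω.1 * ω.2)} :=
        mutualInfo_le_mutualInfo_comp_add (prodWeight_nonneg hpX.1 hpH.1) _ _ rowSpace
    _ = miRowRow pX pH + ∑ ω, jointPMF pX pH ω * Real.logb 2 (chi q T (ω.1 * ω.2).rank) := by
        simp only [hrow, hcard]
    _ = _ := by
        rw [← Jrank_add_sum_prRankXY_mul_logb_chi pX pH (hq ▸ Fintype.one_lt_card)]
        ring

/-- for an α-type input,
I(X;Y) ≤ J(rank X; rank Y) + I(⟨X^T⟩;⟨Y^T⟩) + ∑_{r,s} Pr{rank X = r, rank Y = s} log₂ χ_r[s]. -/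
theorem alpha_type_upper_bound
    {F : Type} [Field F] [Fintype F] (q T M N : ℕ) (hq : Fintype.card F = q)
    (pH : Matrix (Fin M) (Fin N) F → ℝ) (hpH : IsPMF pH)
    (pX : Matrix (Fin T) (Fin M) F → ℝ) (hpX : IsPMF pX) (hα : IsAlphaType pX) :
    miXY pX pH
      ≤ Jrank q pX pH + miRowRow pX pH
        + ∑ r ∈ Finset.range (T + 1), ∑ s ∈ Finset.range (T + 1),
            prRankXY pX pH r s * Real.logb 2 (chi q r s : ℝ) :=
  alpha_type_upper_bound_general q T M N hq pH hpH pX hpX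

end
end

section
/- For LOC(H,T) with T ≥ M and any input distribution with Pr{rank(X) = M} = 1, J(rank(X);rank(Y)) = (T−M)·E[rank(H)]·log₂ q + ε(T,q), where ε(T,q) = ∑_s Pr{rank(H)=s} · log₂( χ̃_T[s]/χ̃_M[s] ) satisfies 0 ≤ ε(T,q) < 1.8. -/
open scoped Classical
open Finset Matrix Module

noncomputable section

variable {F : Type} [Field F] [Fintype F]

/-- ε(T,q) = ∑_s Pr{rank H = s} · log₂(χ̃_T[s]/χ̃_M[s]). -/
def epsTq {F : Type} [Field F] [Fintype F] (q T : ℕ) {M N : ℕ}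
    (pH : Matrix (Fin M) (Fin N) F → ℝ) : ℝ :=
  ∑ s ∈ Finset.range (M + 1),
    (∑ Hm : Matrix (Fin M) (Fin N) F, if Hm.rank = s then pH Hm else 0) *
      Real.logb 2 (chiTilde q T s / chiTilde q M s)

/-!
If `X` has full column rank then `rank (X * H) = rank H`, so `J` is the expectation of
`log₂ (χ_T[rank H] / χ_M[rank H])`. Writing `χ_m[s] = q ^ (m * s) * χ̃_m[s]` splits the logarithm
into `(T - M) * rank H * log₂ q` and the integrand of `ε`. For the bounds,
`χ̃_m[s] = ∏ i < s, (1 - q ^ (i - m))` is at most `1`, increases with `m` and with `q`, and so is at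
least `χ̃_s[s]` at `q = 2`, a partial product of `∏ i ≥ 1, (1 - 2 ^ (-i)) = 0.2887… > 2 ^ (-1.8)`.
-/

section Rank

theorem mulVec_injective_of_rank_eq_card {m n K : Type*} [Fintype n] [Field K]
    {A : Matrix m n K} (hA : A.rank = Fintype.card n) : Function.Injective A.mulVec := by
  rw [Matrix.mulVec_injective_iff, linearIndependent_iff_card_eq_finrank_span, ← hA,
    Matrix.rank_eq_finrank_span_cols, Set.finrank]

theorem rank_mul_eq_right_of_mulVec_injective {l m n R : Type*} [Fintype m] [Fintype n]
    [CommSemiring R] {A : Matrix l m R} (hA : Function.Injective A.mulVec) (B : Matrix m n R) :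
    (A * B).rank = B.rank := by
  rw [Matrix.rank, Matrix.rank, Matrix.mulVecLin_mul, LinearMap.range_comp]
  exact (Submodule.equivMapOfInjective A.mulVecLin hA _).finrank_eq.symm

end Rank

section Expectation

theorem sum_sum_ite_mul {Ω β R : Type*} [Fintype Ω] [DecidableEq β] [NonUnitalNonAssocSemiring R]
    (p : Ω → R) {f : Ω → β} {S : Finset β} (hf : ∀ ω, f ω ∈ S) (g : β → R) :
    ∑ b ∈ S, (∑ ω, if f ω = b then p ω else 0) * g b = ∑ ω, p ω * g (f ω) := by
  simp_rw [Finset.sum_mul, ite_mul, zero_mul]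
  rw [Finset.sum_comm]
  exact Finset.sum_congr rfl fun ω _ => by rw [Finset.sum_ite_eq, if_pos (hf ω)]

namespace IsPMF

variable {Ω : Type*} [Fintype Ω] {p : Ω → ℝ}

theorem eq_zero_of_sum_ite_eq_one (hp : IsPMF p) {P : Ω → Prop} [DecidablePred P]
    (h : (∑ ω, if P ω then p ω else 0) = 1) {ω : Ω} (hω : ¬P ω) : p ω = 0 := by
  have le : ∀ ω ∈ Finset.univ, (if P ω then p ω else 0) ≤ p ω := fun ω _ => by
    split_ifs
    exacts [le_rfl, hp.1 ω]
  have eq := (Finset.sum_eq_sum_iff_of_le le).1 (h.trans hp.2.symm) ω (Finset.mem_univ ω)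
  rwa [if_neg hω, eq_comm] at eq

theorem sum_mul_lt (hp : IsPMF p) {g : Ω → ℝ} {c : ℝ} (hg : ∀ ω, g ω < c) :
    ∑ ω, p ω * g ω < c := by
  obtain ⟨ω, -, hω⟩ : ∃ ω ∈ Finset.univ, p ω ≠ 0 :=
    Finset.exists_ne_zero_of_sum_ne_zero (hp.2.trans_ne one_ne_zero)
  calc ∑ ω, p ω * g ω
      < ∑ ω, p ω * c := Finset.sum_lt_sum
        (fun ω _ => mul_le_mul_of_nonneg_left (hg ω).le (hp.1 ω))
        ⟨ω, Finset.mem_univ ω, mul_lt_mul_of_pos_left (hg ω) ((hp.1 ω).lt_of_ne' hω)⟩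
    _ = c := by rw [← Finset.sum_mul, hp.2, one_mul]

end IsPMF

end Expectation

section EulerProduct

theorem one_sub_sum_le_prod_one_sub {ι R : Type*} [CommRing R] [LinearOrder R]
    [IsStrictOrderedRing R] (s : Finset ι) {f : ι → R} (h0 : ∀ i ∈ s, 0 ≤ f i)
    (h1 : ∀ i ∈ s, f i ≤ 1) : 1 - ∑ i ∈ s, f i ≤ ∏ i ∈ s, (1 - f i) := by
  induction s using Finset.cons_induction with
  | empty => simp
  | cons a s ha ih =>
    rw [Finset.forall_mem_cons] at h0 h1
    have prod_le_one : ∏ i ∈ s, (1 - f i) ≤ 1 :=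
      Finset.prod_le_one (fun i hi => sub_nonneg.2 (h1.2 i hi)) fun i hi =>
        sub_le_self 1 (h0.2 i hi)
    rw [Finset.sum_cons, Finset.prod_cons]
    linarith [ih h0.2 h1.2, mul_le_of_le_one_right h0.1 prod_le_one]

theorem prod_one_sub_pow_mul_le {K : Type*} [Field K] [LinearOrder K] [IsStrictOrderedRing K]
    {x : K} (hx0 : 0 ≤ x) (hx1 : x < 1) (k n : ℕ) :
    (∏ i ∈ Finset.range k, (1 - x ^ (i + 1))) * (1 - x ^ (k + 1) / (1 - x)) ≤
      ∏ i ∈ Finset.range n, (1 - x ^ (i + 1)) := by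
  have pow_le_one (i : ℕ) : x ^ (i + 1) ≤ 1 := pow_le_one₀ hx0 hx1.le
  have prod_nonneg (s : Finset ℕ) : 0 ≤ ∏ i ∈ s, (1 - x ^ (i + 1)) :=
    Finset.prod_nonneg fun i _ => sub_nonneg.2 (pow_le_one i)
  have sum_tail_le : ∑ i ∈ Finset.Ico k (n + k), x ^ (i + 1) ≤ x ^ (k + 1) / (1 - x) := by
    simp_rw [pow_succ, ← Finset.sum_mul, mul_div_right_comm]
    exact mul_le_mul_of_nonneg_right (geom_sum_Ico_le_of_lt_one hx0 hx1) hx0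
  calc (∏ i ∈ Finset.range k, (1 - x ^ (i + 1))) * (1 - x ^ (k + 1) / (1 - x))
      ≤ (∏ i ∈ Finset.range k, (1 - x ^ (i + 1))) *
          ∏ i ∈ Finset.Ico k (n + k), (1 - x ^ (i + 1)) :=
        mul_le_mul_of_nonneg_left ((sub_le_sub_left sum_tail_le 1).trans <|
          one_sub_sum_le_prod_one_sub _ (fun i _ => by positivity) fun i _ => pow_le_one i)
          (prod_nonneg _)
    _ = ∏ i ∈ Finset.range (n + k), (1 - x ^ (i + 1)) :=
        Finset.prod_range_mul_prod_Ico _ (Nat.le_add_left k n)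
    _ = (∏ i ∈ Finset.range n, (1 - x ^ (i + 1))) *
          ∏ i ∈ Finset.Ico n (n + k), (1 - x ^ (i + 1)) :=
        (Finset.prod_range_mul_prod_Ico _ (Nat.le_add_right n k)).symm
    _ ≤ ∏ i ∈ Finset.range n, (1 - x ^ (i + 1)) :=
        mul_le_of_le_one_right (prod_nonneg _) <| Finset.prod_le_one
          (fun i _ => sub_nonneg.2 (pow_le_one i)) fun i _ => sub_le_self 1 (by positivity)

theorem two_rpow_neg_lt_prod_one_sub_two_inv_pow (n : ℕ) :
    (2 : ℝ) ^ (-1.8 : ℝ) < ∏ i ∈ Finset.range n, (1 - (2 : ℝ)⁻¹ ^ (i + 1)) := by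
  have rpow_pow_five : ((2 : ℝ) ^ (-1.8 : ℝ)) ^ 5 = 1 / 512 := by
    rw [← Real.rpow_mul_natCast zero_le_two, show (-1.8 : ℝ) * (5 : ℕ) = (-9 : ℤ) by norm_num,
      Real.rpow_intCast]
    norm_num
  -- Four factors and the tail estimate give `4725 / 16384 = 0.28839…`; three would not suffice.
  calc (2 : ℝ) ^ (-1.8 : ℝ)
      < 4725 / 16384 := lt_of_pow_lt_pow_left₀ 5 (by norm_num) (by rw [rpow_pow_five]; norm_num)
    _ = (∏ i ∈ Finset.range 4, (1 - (2 : ℝ)⁻¹ ^ (i + 1))) *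
          (1 - (2 : ℝ)⁻¹ ^ (4 + 1) / (1 - 2⁻¹)) := by norm_num [Finset.prod_range_succ]
    _ ≤ ∏ i ∈ Finset.range n, (1 - (2 : ℝ)⁻¹ ^ (i + 1)) :=
        prod_one_sub_pow_mul_le (by norm_num) (by norm_num) 4 n

end EulerProduct

section ChiTilde

variable {p q m n s : ℕ}

-- For `m < s` the subtractions truncate, and both sides vanish through the factor at `i = m`.
theorem chiTilde_eq_prod (hq : 0 < q) (m s : ℕ) :
    chiTilde q m s = ∏ i ∈ Finset.range s, (1 - ((q : ℝ) ^ (m - i))⁻¹) := by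
  have pow_eq_prod : (q : ℝ) ^ (m * s) = ∏ _i ∈ Finset.range s, (q : ℝ) ^ m := by
    rw [Finset.prod_const, Finset.card_range, pow_mul]
  rw [chiTilde, chi, pow_eq_prod, Nat.cast_prod, ← Finset.prod_div_distrib]
  refine Finset.prod_congr rfl fun i _ => ?_
  rcases le_total i m with him | hmi
  · rw [Nat.cast_sub (Nat.pow_le_pow_right hq him), Nat.cast_pow, Nat.cast_pow, sub_div,
      div_self (by positivity), pow_sub₀ _ (by positivity) him, mul_inv, inv_inv, mul_comm,
      div_eq_mul_inv]
  · simp [Nat.sub_eq_zero_of_le (Nat.pow_le_pow_right hq hmi), Nat.sub_eq_zero_of_le hmi]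

theorem chiTilde_self (hq : 0 < q) (s : ℕ) :
    chiTilde q s s = ∏ i ∈ Finset.range s, (1 - (q : ℝ)⁻¹ ^ (i + 1)) := by
  rw [chiTilde_eq_prod hq, ← Finset.prod_range_reflect]
  refine Finset.prod_congr rfl fun i hi => ?_
  rw [inv_pow, show s - (s - 1 - i) = i + 1 by grind]

theorem chiTilde_le_one (hq : 0 < q) (m s : ℕ) : chiTilde q m s ≤ 1 := by
  rw [chiTilde_eq_prod hq]
  refine Finset.prod_le_one (fun i _ => sub_nonneg.2 ?_) fun i _ => sub_le_self 1 (by positivity)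
  exact inv_le_one_of_one_le₀ (one_le_pow₀ (Nat.one_le_cast.2 hq))

theorem chiTilde_le_chiTilde (hp : 0 < p) (hpq : p ≤ q) (hmn : m ≤ n) (s : ℕ) :
    chiTilde p m s ≤ chiTilde q n s := by
  rw [chiTilde_eq_prod hp, chiTilde_eq_prod (hp.trans_le hpq)]
  have one_le : (1 : ℝ) ≤ p := Nat.one_le_cast.2 hp
  refine Finset.prod_le_prod
    (fun i _ => sub_nonneg.2 (inv_le_one_of_one_le₀ (one_le_pow₀ one_le))) fun i _ => ?_
  have pow_le_pow : (p : ℝ) ^ (m - i) ≤ (q : ℝ) ^ (n - i) :=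
    (pow_le_pow_right₀ one_le (Nat.sub_le_sub_right hmn i)).trans <|
      pow_le_pow_left₀ p.cast_nonneg (Nat.cast_le.2 hpq) _
  gcongr

theorem two_rpow_neg_lt_chiTilde (hq : 2 ≤ q) (hs : s ≤ m) :
    (2 : ℝ) ^ (-1.8 : ℝ) < chiTilde q m s :=
  calc (2 : ℝ) ^ (-1.8 : ℝ)
      < ∏ i ∈ Finset.range s, (1 - (2 : ℝ)⁻¹ ^ (i + 1)) :=
        two_rpow_neg_lt_prod_one_sub_two_inv_pow s
    _ = chiTilde 2 s s := by rw [chiTilde_self two_pos, Nat.cast_ofNat]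
    _ ≤ chiTilde q m s := chiTilde_le_chiTilde two_pos hq hs s

theorem chiTilde_pos (hq : 2 ≤ q) (hs : s ≤ m) : 0 < chiTilde q m s :=
  (Real.rpow_pos_of_pos two_pos _).trans (two_rpow_neg_lt_chiTilde hq hs)

theorem logb_chiTilde_div_nonneg (hq : 2 ≤ q) (hs : s ≤ m) (hmn : m ≤ n) :
    0 ≤ Real.logb 2 (chiTilde q n s / chiTilde q m s) :=
  Real.logb_nonneg one_lt_two <| (one_le_div (chiTilde_pos hq hs)).2 <|
    chiTilde_le_chiTilde (two_pos.trans_le hq) le_rfl hmn s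

theorem logb_chiTilde_div_lt (hq : 2 ≤ q) (hm : s ≤ m) (hn : s ≤ n) :
    Real.logb 2 (chiTilde q n s / chiTilde q m s) < 1.8 := by
  have hpos := chiTilde_pos hq hm
  have logb_num_nonpos : Real.logb 2 (chiTilde q n s) ≤ 0 :=
    Real.logb_nonpos one_lt_two (chiTilde_pos hq hn).le (chiTilde_le_one (two_pos.trans_le hq) n s)
  have lt_logb_den : -1.8 < Real.logb 2 (chiTilde q m s) :=
    (Real.lt_logb_iff_rpow_lt one_lt_two hpos).2 (two_rpow_neg_lt_chiTilde hq hm)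
  rw [Real.logb_div (chiTilde_pos hq hn).ne' hpos.ne']
  linarith

theorem chi_eq_pow_mul_chiTilde (hq : 0 < q) (m s : ℕ) :
    (chi q m s : ℝ) = (q : ℝ) ^ (m * s) * chiTilde q m s :=
  (mul_div_cancel₀ _ (by positivity)).symm

theorem logb_chi (hq : 2 ≤ q) (hs : s ≤ m) (b : ℝ) :
    Real.logb b (chi q m s) = m * s * Real.logb b q + Real.logb b (chiTilde q m s) := by
  rw [chi_eq_pow_mul_chiTilde (two_pos.trans_le hq),
    Real.logb_mul (by positivity) (chiTilde_pos hq hs).ne', Real.logb_pow, Nat.cast_mul]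

theorem logb_chi_div (hq : 2 ≤ q) (hm : s ≤ m) (hn : s ≤ n) (b : ℝ) :
    Real.logb b (chi q n s / chi q m s) =
      ((n : ℝ) - m) * s * Real.logb b q + Real.logb b (chiTilde q n s / chiTilde q m s) := by
  have chi_ne_zero {k : ℕ} (hk : s ≤ k) : (chi q k s : ℝ) ≠ 0 := by
    rw [chi_eq_pow_mul_chiTilde (two_pos.trans_le hq)]
    exact mul_ne_zero (by positivity) (chiTilde_pos hq hk).ne'
  rw [Real.logb_div (chi_ne_zero hn) (chi_ne_zero hm), logb_chi hq hn, logb_chi hq hm,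
    Real.logb_div (chiTilde_pos hq hn).ne' (chiTilde_pos hq hm).ne']
  ring

end ChiTilde

section Channel

variable {q T M N : ℕ} {pX : Matrix (Fin T) (Fin M) F → ℝ} {pH : Matrix (Fin M) (Fin N) F → ℝ}

theorem Jrank_eq_sum_jointPMF (q : ℕ) (pX : Matrix (Fin T) (Fin M) F → ℝ)
    (pH : Matrix (Fin M) (Fin N) F → ℝ) :
    Jrank q pX pH = ∑ ω, jointPMF pX pH ω *
      Real.logb 2 ((chi q T (ω.1 * ω.2).rank : ℝ) / chi q ω.1.rank (ω.1 * ω.2).rank) := by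
  have mem (ω : Matrix (Fin T) (Fin M) F × Matrix (Fin M) (Fin N) F) :
      (ω.1.rank, (ω.1 * ω.2).rank) ∈ Finset.range (T + 1) ×ˢ Finset.range (T + 1) := by
    simp [Matrix.rank_le_height]
  rw [← sum_sum_ite_mul (jointPMF pX pH) mem
    fun r => Real.logb 2 ((chi q T r.2 : ℝ) / chi q r.1 r.2), Finset.sum_product]
  simp only [Jrank, prRankXY, Prod.mk.injEq]

theorem epsTq_eq_sum (q T : ℕ) (pH : Matrix (Fin M) (Fin N) F → ℝ) :
    epsTq q T pH =
      ∑ H, pH H * Real.logb 2 (chiTilde q T H.rank / chiTilde q M H.rank) :=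
  sum_sum_ite_mul pH (fun H => Finset.mem_range_succ_iff.2 H.rank_le_height) fun s =>
    Real.logb 2 (chiTilde q T s / chiTilde q M s)

theorem Jrank_eq_sum_of_prRankX_eq_one (q : ℕ) (hpX : IsPMF pX) (hfull : prRankX pX M = 1)
    (pH : Matrix (Fin M) (Fin N) F → ℝ) :
    Jrank q pX pH = ∑ H, pH H * Real.logb 2 ((chi q T H.rank : ℝ) / chi q M H.rank) := by
  have term_eq (X : Matrix (Fin T) (Fin M) F) (H : Matrix (Fin M) (Fin N) F) :
      pX X * pH H * Real.logb 2 ((chi q T (X * H).rank : ℝ) / chi q X.rank (X * H).rank) =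
        pX X * (pH H * Real.logb 2 ((chi q T H.rank : ℝ) / chi q M H.rank)) := by
    by_cases hX : X.rank = M
    · have rank_mul : (X * H).rank = H.rank := rank_mul_eq_right_of_mulVec_injective
        (mulVec_injective_of_rank_eq_card (hX.trans (Fintype.card_fin M).symm)) H
      rw [rank_mul, hX, mul_assoc]
    · rw [hpX.eq_zero_of_sum_ite_eq_one hfull hX, zero_mul, zero_mul, zero_mul]
  rw [Jrank_eq_sum_jointPMF, Fintype.sum_prod_type]
  simp_rw [jointPMF, term_eq]
  rw [← Finset.sum_mul_sum, hpX.2, one_mul]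

theorem epsTq_nonneg (hq : 2 ≤ q) (hTM : M ≤ T) (hpH : ∀ H, 0 ≤ pH H) : 0 ≤ epsTq q T pH := by
  rw [epsTq_eq_sum]
  exact Finset.sum_nonneg fun H _ =>
    mul_nonneg (hpH H) (logb_chiTilde_div_nonneg hq H.rank_le_height hTM)

theorem epsTq_lt (hq : 2 ≤ q) (hTM : M ≤ T) (hpH : IsPMF pH) : epsTq q T pH < 1.8 := by
  rw [epsTq_eq_sum]
  exact hpH.sum_mul_lt fun H =>
    logb_chiTilde_div_lt hq H.rank_le_height (H.rank_le_height.trans hTM)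

theorem sum_mul_logb_chi_div (hq : 2 ≤ q) (hTM : M ≤ T) (pH : Matrix (Fin M) (Fin N) F → ℝ) :
    ∑ H, pH H * Real.logb 2 ((chi q T H.rank : ℝ) / chi q M H.rank) =
      ((T : ℝ) - M) * (∑ H, pH H * (H.rank : ℝ)) * Real.logb 2 q + epsTq q T pH := by
  rw [epsTq_eq_sum, Finset.mul_sum, Finset.sum_mul, ← Finset.sum_add_distrib]
  refine Finset.sum_congr rfl fun H _ => ?_
  rw [logb_chi_div hq H.rank_le_height (H.rank_le_height.trans hTM)]
  ring

end Channel

/-- if T ≥ M and the input has rank M with probability one, then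
J(rank X; rank Y) = (T−M)·E[rank H]·log₂ q + ε(T,q), where 0 ≤ ε(T,q) < 1.8. -/
theorem Jrank_full_rank_input
    {F : Type} [Field F] [Fintype F] (q T M N : ℕ) (hq : Fintype.card F = q)
    (hTM : M ≤ T)
    (pH : Matrix (Fin M) (Fin N) F → ℝ) (hpH : IsPMF pH)
    (pX : Matrix (Fin T) (Fin M) F → ℝ) (hpX : IsPMF pX)
    (hfull : prRankX pX M = 1) :
    Jrank q pX pH
        = ((T : ℝ) - (M : ℝ))
            * (∑ Hm : Matrix (Fin M) (Fin N) F, pH Hm * (Hm.rank : ℝ))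
            * Real.logb 2 (q : ℝ)
          + epsTq q T pH
    ∧ 0 ≤ epsTq q T pH ∧ epsTq q T pH < 1.8 := by
  have hq2 : 2 ≤ q := hq ▸ Fintype.one_lt_card
  refine ⟨?_, epsTq_nonneg hq2 hTM hpH.1, epsTq_lt hq2 hTM hpH⟩
  rw [Jrank_eq_sum_of_prRankX_eq_one q hpX hfull, sum_mul_logb_chi_div hq2 hTM]

end
end

section
/- For LOC(H,T) with any α-type input distribution and Y = XH: for all subspaces U, V of F^T with V ⊆ U, dim(U) = r and dim(V) = s, one has Pr{⟨X⟩ = U, ⟨Y⟩ = V} = Pr{rank(X)=r, rank(Y)=s} / ( [T choose r]_q · [r choose s]_q ); moreover Pr{⟨X⟩ = U} = Pr{rank(X)=r} / [T choose r]_q and Pr{⟨Y⟩ = V} = Pr{rank(Y)=s} / [T choose s]_q. -/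
open scoped Classical
open Finset Matrix Module

noncomputable section

variable {F : Type} [Field F] [Fintype F]

/-!
Fix the transfer matrix `H`. Left multiplication of `X` by `P ∈ GL_T` preserves the row space of
`X`, hence its probability, and moves the pair `(⟨X⟩, ⟨XH⟩)` to `(P⟨X⟩, P⟨XH⟩)`. Since `GL_T` is
transitive on the subspaces of a given dimension, and the stabiliser of `U` is transitive on the
subspaces of `U` of a given dimension, `⟨XH⟩` is uniform given its dimension, also conditionally on
`⟨X⟩ = U`; the Gaussian binomials count these subspaces. In the joint formula the weight restricted
to `rank (XH) = s` is again constant on row-space classes, so the formula for `⟨X⟩` applies to it.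
Averaging over `H` finishes the proof.
-/

theorem chi_self_pos {q : ℕ} (hq : 1 < q) (r : ℕ) : 0 < chi q r r :=
  Finset.prod_pos fun _ hi ↦ Nat.sub_pos_of_lt (Nat.pow_lt_pow_right hq (Finset.mem_range.1 hi))

section Counting

variable {K E : Type*} [DivisionRing K] [Fintype K] [AddCommGroup E] [Module K E] [Finite E]

theorem card_linearIndependent_eq_chi {s : ℕ} (hs : s ≤ finrank K E) :
    Nat.card {v : Fin s → E // LinearIndependent K v} = chi (Fintype.card K) (finrank K E) s := by
  rw [card_linearIndependent hs, chi, Finset.prod_range]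

theorem card_linearIndependent_span_eq (V : Submodule K E) :
    Nat.card {v : Fin (finrank K V) → E //
        LinearIndependent K v ∧ Submodule.span K (Set.range v) = V} =
      chi (Fintype.card K) (finrank K V) (finrank K V) := by
  rw [← card_linearIndependent_eq_chi le_rfl]
  have span_coe {w : Fin (finrank K V) → V} (hw : LinearIndependent K w) :
      Submodule.span K (Set.range (V.subtype ∘ w)) = V := by
    rw [Set.range_comp, ← Submodule.map_span,
      hw.span_eq_top_of_card_eq_finrank' (Fintype.card_fin _), Submodule.map_subtype_top]
  exact Nat.card_congr
    { toFun v := ⟨fun i ↦ ⟨v.1 i, v.2.2.le (Submodule.subset_span ⟨i, rfl⟩)⟩,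
        .of_comp V.subtype v.2.1⟩
      invFun w := ⟨V.subtype ∘ w.1, w.2.map' V.subtype V.ker_subtype, span_coe w.2⟩ }

theorem card_linearIndependent_eq_ncard_mul_chi (s : ℕ) :
    Nat.card {v : Fin s → E // LinearIndependent K v} =
      {V : Submodule K E | finrank K V = s}.ncard * chi (Fintype.card K) s s := by
  let spanOf (v : {v : Fin s → E // LinearIndependent K v}) :
      {V : Submodule K E | finrank K V = s} :=
    ⟨Submodule.span K (Set.range v.1), by simpa using finrank_span_eq_card v.2⟩
  have card_fiber (V) : Nat.card {v // spanOf v = V} = chi (Fintype.card K) s s := by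
    obtain ⟨V, rfl⟩ := V
    rw [← card_linearIndependent_span_eq V]
    exact Nat.card_congr <| (Equiv.subtypeEquivRight fun _ ↦ Subtype.ext_iff).trans
      (Equiv.subtypeSubtypeEquivSubtypeInter _ fun v ↦ Submodule.span K (Set.range v) = V)
  have : Fintype {V : Submodule K E | finrank K V = s} := Fintype.ofFinite _
  rw [← Nat.card_congr (Equiv.sigmaFiberEquiv spanOf), Nat.card_sigma]
  simp only [card_fiber, Finset.sum_const, Finset.card_univ, smul_eq_mul,
    ← Nat.card_eq_fintype_card, Nat.card_coe_set_eq]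

theorem ncard_finrank_eq {s : ℕ} (hs : s ≤ finrank K E) :
    ({V : Submodule K E | finrank K V = s}.ncard : ℝ) =
      gaussR (Fintype.card K) (finrank K E) s := by
  have hpos := chi_self_pos (Fintype.one_lt_card (α := K)) s
  rw [gaussR, eq_div_iff (by positivity), ← card_linearIndependent_eq_chi hs,
    card_linearIndependent_eq_ncard_mul_chi, Nat.cast_mul]

theorem ncard_le_finrank_eq (U : Submodule K E) {s : ℕ} (hs : s ≤ finrank K U) :
    ({V : Submodule K E | V ≤ U ∧ finrank K V = s}.ncard : ℝ) =
      gaussR (Fintype.card K) (finrank K U) s := by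
  have image_eq : {V : Submodule K E | V ≤ U ∧ finrank K V = s} =
      Submodule.map U.subtype '' {W | finrank K W = s} := by
    ext V
    constructor
    · rintro ⟨hVU, rfl⟩
      exact ⟨V.submoduleOf U, (Submodule.submoduleOfEquivOfLe hVU).finrank_eq,
        (Submodule.map_comap_subtype U V).trans (inf_eq_right.2 hVU)⟩
    · rintro ⟨W, rfl, rfl⟩
      exact ⟨Submodule.map_subtype_le U W, Submodule.finrank_map_subtype_eq U W⟩
  rw [image_eq, Set.ncard_image_of_injective _
    (Submodule.map_injective_of_injective U.injective_subtype), ncard_finrank_eq hs]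

end Counting

section Transitivity

variable {K E : Type*} [DivisionRing K] [AddCommGroup E] [Module K E] [FiniteDimensional K E]

theorem exists_linearEquiv_map_eq {U U' : Submodule K E} (h : finrank K U = finrank K U') :
    ∃ g : E ≃ₗ[K] E, U.map g.toLinearMap = U' := by
  let e : U ≃ₗ[K] U' := LinearEquiv.ofFinrankEq U U' h
  obtain ⟨g, hg⟩ := Submodule.exists_linearEquiv_restrict_eq e
  have hcomp : g.toLinearMap ∘ₗ U.subtype = U'.subtype ∘ₗ e.toLinearMap :=
    LinearMap.ext fun x ↦ (hg x).symm
  refine ⟨g, ?_⟩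
  calc U.map g.toLinearMap = LinearMap.range (g.toLinearMap ∘ₗ U.subtype) := by
        rw [LinearMap.range_comp, Submodule.range_subtype]
    _ = U' := by rw [hcomp, LinearEquiv.range_comp, Submodule.range_subtype]

theorem exists_linearEquiv_map_eq_of_le {U V V' : Submodule K E} (hV : V ≤ U) (hV' : V' ≤ U)
    (h : finrank K V = finrank K V') :
    ∃ g : E ≃ₗ[K] E, U.map g.toLinearMap = U ∧ V.map g.toLinearMap = V' := by
  obtain ⟨e, he⟩ := exists_linearEquiv_map_eq (U := V.submoduleOf U) (U' := V'.submoduleOf U) <| by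
    rw [(Submodule.submoduleOfEquivOfLe hV).finrank_eq, h,
      (Submodule.submoduleOfEquivOfLe hV').finrank_eq]
  obtain ⟨g, hg⟩ := Submodule.exists_linearEquiv_restrict_eq e
  have hcomp : g.toLinearMap ∘ₗ U.subtype = U.subtype ∘ₗ e.toLinearMap :=
    LinearMap.ext fun x ↦ (hg x).symm
  have map_subtype {W : Submodule K E} (hW : W ≤ U) : (W.submoduleOf U).map U.subtype = W :=
    (Submodule.map_comap_subtype U W).trans (inf_eq_right.2 hW)
  have map_eq (W : Submodule K U) :
      (W.map U.subtype).map g.toLinearMap = (W.map e.toLinearMap).map U.subtype := by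
    rw [← Submodule.map_comp, hcomp, Submodule.map_comp]
  refine ⟨g, ?_, ?_⟩
  · simpa [LinearEquiv.range] using map_eq ⊤
  · rw [← map_subtype hV, map_eq, he, map_subtype hV']

end Transitivity

section MatrixSpaces

variable {K : Type} [Field K] {T M N : ℕ}

theorem rank_eq_finrank_colSpace (X : Matrix (Fin T) (Fin M) K) :
    X.rank = finrank K (colSpace X) := rfl

theorem colSpace_mul (A : Matrix (Fin T) (Fin M) K) (X : Matrix (Fin M) (Fin N) K) :
    colSpace (A * X) = (colSpace X).map A.mulVecLin := by
  rw [colSpace, mulVecLin_mul, LinearMap.range_comp, colSpace]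

theorem colSpace_mul_le (X : Matrix (Fin T) (Fin M) K) (H : Matrix (Fin M) (Fin N) K) :
    colSpace (X * H) ≤ colSpace X := by
  rw [colSpace, mulVecLin_mul]
  exact LinearMap.range_comp_le_range _ _

theorem rowSpace_mul_le (A : Matrix (Fin T) (Fin M) K) (X : Matrix (Fin M) (Fin N) K) :
    rowSpace (A * X) ≤ rowSpace X := by
  rw [rowSpace, transpose_mul]
  exact colSpace_mul_le _ _

theorem rank_eq_of_rowSpace_eq {T' : ℕ} {X : Matrix (Fin T) (Fin M) K}
    {X' : Matrix (Fin T') (Fin M) K} (h : rowSpace X = rowSpace X') : X.rank = X'.rank := by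
  rw [← rank_transpose X, ← rank_transpose X']
  exact congrArg (fun W : Submodule K (Fin M → K) ↦ finrank K W) h

theorem rowSpace_generalLinearGroup_mul (P : GL (Fin T) K) (X : Matrix (Fin T) (Fin M) K) :
    rowSpace (P.1 * X) = rowSpace X := by
  refine (rowSpace_mul_le _ _).antisymm ?_
  simpa [← Matrix.mul_assoc] using rowSpace_mul_le (P⁻¹).1 (P.1 * X)

theorem exists_generalLinearGroup_mulVecLin_eq (g : (Fin T → K) ≃ₗ[K] (Fin T → K)) :
    ∃ P : GL (Fin T) K, P.1.mulVecLin = g.toLinearMap := by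
  obtain ⟨P, hP⟩ :=
    GeneralLinearGroup.toLin.surjective (LinearMap.GeneralLinearGroup.ofLinearEquiv g)
  exact ⟨P, congrArg Units.val hP⟩

theorem colSpace_generalLinearGroup_mul_eq_map_iff (P : GL (Fin T) K)
    (X : Matrix (Fin T) (Fin M) K) (U : Submodule K (Fin T → K)) :
    colSpace (P.1 * X) = U.map P.1.mulVecLin ↔ colSpace X = U := by
  rw [colSpace_mul]
  exact (Submodule.map_injective_of_injective (mulVec_injective_of_isUnit P.isUnit)).eq_iff

end MatrixSpaces

/-- Left multiplication by an invertible matrix. -/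
def generalLinearGroupMulLeft {K : Type*} [Field K] {T M : ℕ} (P : GL (Fin T) K) :
    Matrix (Fin T) (Fin M) K ≃ Matrix (Fin T) (Fin M) K where
  toFun X := P.1 * X
  invFun X := (P⁻¹).1 * X
  left_inv X := by simp [← Matrix.mul_assoc]
  right_inv X := by simp [← Matrix.mul_assoc]

theorem sum_ite_eq_div_ncard {Ω L R : Type*} [Fintype Ω] [Finite L] [DecidableEq L] [Field R]
    [CharZero R] (w : Ω → R) (f : Ω → L) (S : L → Prop) [DecidablePred S] {l₀ : L} (hl₀ : S l₀)
    (h : ∀ l, S l → (∑ ω, if f ω = l then w ω else 0) = ∑ ω, if f ω = l₀ then w ω else 0) :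
    (∑ ω, if f ω = l₀ then w ω else 0) =
      (∑ ω, if S (f ω) then w ω else 0) / {l | S l}.ncard := by
  have : Fintype L := Fintype.ofFinite L
  have hcard : ({l | S l}.ncard : R) ≠ 0 := Nat.cast_ne_zero.2 (Set.ncard_ne_zero_of_mem hl₀)
  rw [eq_div_iff hcard]
  symm
  calc (∑ ω, if S (f ω) then w ω else 0)
      = ∑ ω, ∑ l with S l, if f ω = l then w ω else 0 := by simp [Finset.sum_ite_eq]
    _ = ∑ l with S l, ∑ ω, if f ω = l then w ω else 0 := Finset.sum_comm
    _ = #{l | S l} • ∑ ω, if f ω = l₀ then w ω else 0 :=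
        Finset.sum_eq_card_nsmul fun l hl ↦ h l (Finset.mem_filter.1 hl).2
    _ = (∑ ω, if f ω = l₀ then w ω else 0) * {l | S l}.ncard := by
        rw [nsmul_eq_mul, mul_comm, ← Set.ncard_coe_finset, Finset.coe_filter_univ]

namespace IsAlphaType

variable {K : Type} [Field K] [Fintype K] {T M N : ℕ} {p : Matrix (Fin T) (Fin M) K → ℝ}

theorem sum_ite_generalLinearGroup_mul (hp : IsAlphaType p) (P : GL (Fin T) K)
    (A : Matrix (Fin T) (Fin M) K → Prop) [DecidablePred A] :
    (∑ X, if A (P.1 * X) then p X else 0) = ∑ X, if A X then p X else 0 := by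
  rw [← Equiv.sum_comp (generalLinearGroupMulLeft P) fun X ↦ if A X then p X else 0]
  exact Finset.sum_congr rfl fun X _ ↦
    if_congr Iff.rfl (hp _ _ (rowSpace_generalLinearGroup_mul P X).symm) rfl

omit [Fintype K] in
theorem ite_of_rowSpace (hp : IsAlphaType p) {A : Matrix (Fin T) (Fin M) K → Prop}
    [DecidablePred A] (hA : ∀ X X', rowSpace X = rowSpace X' → (A X ↔ A X')) :
    IsAlphaType fun X ↦ if A X then p X else 0 :=
  fun X X' h ↦ if_congr (hA X X' h) (hp X X' h) rfl

theorem sum_colSpace_mul_eq_sum_rank_mul_div (hp : IsAlphaType p) (H : Matrix (Fin M) (Fin N) K)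
    (V : Submodule K (Fin T → K)) :
    (∑ X, if colSpace (X * H) = V then p X else 0) =
      (∑ X : Matrix (Fin T) (Fin M) K, if (X * H).rank = finrank K V then p X else 0) /
        gaussR (Fintype.card K) T (finrank K V) := by
  have hinv (V' : Submodule K (Fin T → K)) (hV' : finrank K V' = finrank K V) :
      (∑ X, if colSpace (X * H) = V' then p X else 0) =
        ∑ X, if colSpace (X * H) = V then p X else 0 := by
    obtain ⟨g, rfl⟩ := exists_linearEquiv_map_eq hV'.symm
    obtain ⟨P, hP⟩ := exists_generalLinearGroup_mulVecLin_eq g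
    rw [← hp.sum_ite_generalLinearGroup_mul P, ← hP]
    simp only [Matrix.mul_assoc, colSpace_generalLinearGroup_mul_eq_map_iff]
  have hcard := ncard_finrank_eq (Submodule.finrank_le V)
  rw [finrank_fin_fun] at hcard
  simp only [rank_eq_finrank_colSpace, ← hcard]
  exact sum_ite_eq_div_ncard p (fun X ↦ colSpace (X * H)) (finrank K · = finrank K V) rfl hinv

theorem sum_colSpace_eq_sum_rank_div (hp : IsAlphaType p) (U : Submodule K (Fin T → K)) :
    (∑ X, if colSpace X = U then p X else 0) =
      (∑ X : Matrix (Fin T) (Fin M) K, if X.rank = finrank K U then p X else 0) /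
        gaussR (Fintype.card K) T (finrank K U) := by
  simpa only [Matrix.mul_one] using
    hp.sum_colSpace_mul_eq_sum_rank_mul_div (1 : Matrix (Fin M) (Fin M) K) U

theorem sum_colSpace_colSpace_mul_congr (hp : IsAlphaType p)
    (H : Matrix (Fin M) (Fin N) K) {U V V' : Submodule K (Fin T → K)} (hV : V ≤ U)
    (hV' : V' ≤ U) (h : finrank K V = finrank K V') :
    (∑ X, if colSpace X = U ∧ colSpace (X * H) = V then p X else 0) =
      ∑ X, if colSpace X = U ∧ colSpace (X * H) = V' then p X else 0 := by
  obtain ⟨g, hgU, rfl⟩ := exists_linearEquiv_map_eq_of_le hV hV' h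
  obtain ⟨P, hP⟩ := exists_generalLinearGroup_mulVecLin_eq g
  have colSpace_eq_iff (X : Matrix (Fin T) (Fin M) K) :
      colSpace (P.1 * X) = U ↔ colSpace X = U := by
    simpa only [hP, hgU] using colSpace_generalLinearGroup_mul_eq_map_iff P X U
  rw [← hp.sum_ite_generalLinearGroup_mul P fun X ↦
    colSpace X = U ∧ colSpace (X * H) = V.map g.toLinearMap, ← hP]
  simp only [colSpace_eq_iff, Matrix.mul_assoc, colSpace_generalLinearGroup_mul_eq_map_iff]

theorem sum_colSpace_colSpace_mul_eq_sum_colSpace_rank_mul_div (hp : IsAlphaType p)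
    (H : Matrix (Fin M) (Fin N) K) {U V : Submodule K (Fin T → K)} (hVU : V ≤ U) :
    (∑ X, if colSpace X = U ∧ colSpace (X * H) = V then p X else 0) =
      (∑ X, if colSpace X = U ∧ (X * H).rank = finrank K V then p X else 0) /
        gaussR (Fintype.card K) (finrank K U) (finrank K V) := by
  have event_iff (X : Matrix (Fin T) (Fin M) K) :
      colSpace X = U ∧ (X * H).rank = finrank K V ↔
        (colSpace (X * H) ≤ U ∧ finrank K (colSpace (X * H)) = finrank K V) ∧ colSpace X = U :=
    ⟨fun ⟨hX, hr⟩ ↦ ⟨⟨hX ▸ colSpace_mul_le X H, hr⟩, hX⟩, fun ⟨⟨_, hr⟩, hX⟩ ↦ ⟨hX, hr⟩⟩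
  have huniform := sum_ite_eq_div_ncard (fun X ↦ if colSpace X = U then p X else 0)
    (fun X ↦ colSpace (X * H)) (fun V' ↦ V' ≤ U ∧ finrank K V' = finrank K V) ⟨hVU, rfl⟩
    fun V' ⟨hV'U, hV'⟩ ↦ by
      simpa only [← ite_and, and_comm] using
        hp.sum_colSpace_colSpace_mul_congr H hV'U hVU hV'
  rw [ncard_le_finrank_eq U (Submodule.finrank_mono hVU)] at huniform
  simp only [event_iff, and_comm (a := colSpace _ = U), ite_and] at huniform ⊢
  exact huniform

theorem sum_colSpace_colSpace_mul_eq_sum_rank_rank_mul_div (hp : IsAlphaType p)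
    (H : Matrix (Fin M) (Fin N) K) {U V : Submodule K (Fin T → K)} (hVU : V ≤ U) :
    (∑ X, if colSpace X = U ∧ colSpace (X * H) = V then p X else 0) =
      (∑ X : Matrix (Fin T) (Fin M) K,
          if X.rank = finrank K U ∧ (X * H).rank = finrank K V then p X else 0) /
        (gaussR (Fintype.card K) T (finrank K U) *
          gaussR (Fintype.card K) (finrank K U) (finrank K V)) := by
  have hrank : IsAlphaType fun X ↦ if (X * H).rank = finrank K V then p X else 0 :=
    hp.ite_of_rowSpace fun X X' h ↦ by
      have hmul : rowSpace (X * H) = rowSpace (X' * H) := by rw [rowSpace_mul, h, rowSpace_mul]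
      rw [rank_eq_of_rowSpace_eq hmul]
  rw [hp.sum_colSpace_colSpace_mul_eq_sum_colSpace_rank_mul_div H hVU, ← div_div]
  simp only [ite_and, hrank.sum_colSpace_eq_sum_rank_div U]

end IsAlphaType

theorem sum_jointPMF_ite {K : Type} [Field K] [Fintype K] {T M N : ℕ}
    (pX : Matrix (Fin T) (Fin M) K → ℝ) (pH : Matrix (Fin M) (Fin N) K → ℝ)
    (A : Matrix (Fin T) (Fin M) K → Matrix (Fin M) (Fin N) K → Prop)
    [∀ X H, Decidable (A X H)] :
    (∑ ω : Matrix (Fin T) (Fin M) K × Matrix (Fin M) (Fin N) K,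
        if A ω.1 ω.2 then jointPMF pX pH ω else 0) =
      ∑ H, (∑ X, if A X H then pX X else 0) * pH H := by
  simp only [Fintype.sum_prod_type_right, jointPMF, Finset.sum_mul, ite_mul, zero_mul]

/-- for an α-type input, the joint and marginal distributions of
the column spaces ⟨X⟩ and ⟨Y⟩ are uniform given dimension:
Pr{⟨X⟩=U, ⟨Y⟩=V} = Pr{rank X = r, rank Y = s}/([T r]_q [r s]_q),
Pr{⟨X⟩=U} = Pr{rank X = r}/[T r]_q and Pr{⟨Y⟩=V} = Pr{rank Y = s}/[T s]_q. -/
theorem alpha_type_column_space_distribution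
    {F : Type} [Field F] [Fintype F] (q T M N : ℕ) (hq : Fintype.card F = q)
    (pH : Matrix (Fin M) (Fin N) F → ℝ) (hpH : IsPMF pH)
    (pX : Matrix (Fin T) (Fin M) F → ℝ) (hpX : IsPMF pX) (hα : IsAlphaType pX)
    (U V : Submodule F (Fin T → F)) (r s : ℕ) (hVU : V ≤ U)
    (hU : Module.finrank F U = r) (hV : Module.finrank F V = s) :
    ((∑ ω : Matrix (Fin T) (Fin M) F × Matrix (Fin M) (Fin N) F,
        if colSpace ω.1 = U ∧ colSpace (ω.1 * ω.2) = V then jointPMF pX pH ω else 0)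
      = prRankXY pX pH r s / (gaussR q T r * gaussR q r s))
    ∧ ((∑ x : Matrix (Fin T) (Fin M) F, if colSpace x = U then pX x else 0)
      = prRankX pX r / gaussR q T r)
    ∧ ((∑ ω : Matrix (Fin T) (Fin M) F × Matrix (Fin M) (Fin N) F,
        if colSpace (ω.1 * ω.2) = V then jointPMF pX pH ω else 0)
      = (∑ ω : Matrix (Fin T) (Fin M) F × Matrix (Fin M) (Fin N) F,
          if (ω.1 * ω.2).rank = s then jointPMF pX pH ω else 0) / gaussR q T s) := by
  subst hq hU hV
  refine ⟨?_, hα.sum_colSpace_eq_sum_rank_div U, ?_⟩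
  · rw [prRankXY, sum_jointPMF_ite pX pH fun X H ↦ colSpace X = U ∧ colSpace (X * H) = V,
      sum_jointPMF_ite pX pH fun X H ↦ X.rank = finrank F U ∧ (X * H).rank = finrank F V,
      Finset.sum_div]
    simp only [hα.sum_colSpace_colSpace_mul_eq_sum_rank_rank_mul_div _ hVU, div_mul_eq_mul_div]
  · rw [sum_jointPMF_ite pX pH fun X H ↦ colSpace (X * H) = V,
      sum_jointPMF_ite pX pH fun X H ↦ (X * H).rank = finrank F V, Finset.sum_div]
    simp only [hα.sum_colSpace_mul_eq_sum_rank_mul_div, div_mul_eq_mul_div]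

end
end
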